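/- arXiv:1407.7422 — 2 statements merged into one kernel-verified Lean document; each statement's English description precedes it below -/
import Mathlib

section
/- With the one-dimensional weighted problem defined in the context, the value η is strictly positive and the infimum defining η is attained, i.e., there exists an admissible Lipschitz function f on [−d/2, d/2] with ∫_{−d/2}^{d/2} |f|^{p−2} f g ds = 0, f ≢ 0, and ∫_{−d/2}^{d/2} |f'|^p g ds = η · ∫_{−d/2}^{d/2} |f|^p g ds. -/
open MeasureTheory Set Real

noncomputable section

/-- The weight `g(s) = ω_{N-1} (d/2 - |s|)^(N-1)`, where `ω_{N-1}` is the Lebesgue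
measure of the unit ball of `ℝ^(N-1)`. -/
def coneWeight (N : ℕ) (d : ℝ) (s : ℝ) : ℝ :=
  (volume (Metric.ball (0 : EuclideanSpace ℝ (Fin (N - 1))) 1)).toReal *
    (d / 2 - |s|) ^ (N - 1)

/-- A function is admissible for the one-dimensional weighted problem if it is
Lipschitz, not identically zero on `[-d/2, d/2]`, and satisfies the constraint
`∫ |f|^(p-2) f g = 0`. -/
def Admissible1D (N : ℕ) (p d : ℝ) (f : ℝ → ℝ) : Prop :=
  (∃ K : NNReal, LipschitzWith K f) ∧
  (∃ x ∈ Icc (-(d / 2)) (d / 2), f x ≠ 0) ∧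
  (∫ s in (-(d / 2))..(d / 2), |f s| ^ (p - 2) * f s * coneWeight N d s) = 0

/-- The value `η`: infimum of the weighted Rayleigh quotient
`(∫ |f'|^p g)/(∫ |f|^p g)` over admissible `f`, where `f'` is the a.e. derivative. -/
def eta1D (N : ℕ) (p d : ℝ) : ℝ :=
  sInf { R : ℝ | ∃ f : ℝ → ℝ, Admissible1D N p d f ∧
    R = (∫ s in (-(d / 2))..(d / 2), |deriv f s| ^ p * coneWeight N d s) /
        (∫ s in (-(d / 2))..(d / 2), |f s| ^ p * coneWeight N d s) }

end


section helpers
open Filter Topology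

noncomputable def opA (n : ℕ) (m : ℝ) (v : ℝ → ℝ) (r : ℝ) : ℝ :=
  r * ∫ σ in (0:ℝ)..1, σ ^ n * (v (r * σ)) ^ m

noncomputable def opH (n : ℕ) (m : ℝ) (v : ℝ → ℝ) (r : ℝ) : ℝ := (opA n m v r) ^ m⁻¹

noncomputable def opT (n : ℕ) (m L : ℝ) (v : ℝ → ℝ) (t : ℝ) : ℝ :=
  ∫ r in (max 0 (min L t))..L, opH n m v r

variable {n : ℕ} {m L : ℝ}

lemma opA_cont (hm : 0 < m) {v : ℝ → ℝ} (hv : Continuous v) : Continuous (opA n m v) := by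
  unfold opA
  have h1 : Continuous fun x : ℝ => x ^ m := Real.continuous_rpow_const hm.le
  refine continuous_id.mul
    (intervalIntegral.continuous_parametric_intervalIntegral_of_continuous' ?_ _ _)
  have : Continuous fun z : ℝ × ℝ => (v (z.1 * z.2)) ^ m := h1.comp (by fun_prop)
  exact (by fun_prop : Continuous fun z : ℝ × ℝ => z.2 ^ n).mul this

lemma opH_cont (hm : 0 < m) {v : ℝ → ℝ} (hv : Continuous v) : Continuous (opH n m v) :=
  (Real.continuous_rpow_const (inv_nonneg.2 hm.le)).comp (opA_cont hm hv)

lemma integrand_cont (hm : 0 < m) {v : ℝ → ℝ} (hv : Continuous v) (r : ℝ) :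
    Continuous fun σ : ℝ => σ ^ n * (v (r * σ)) ^ m := by
  have h1 : Continuous fun x : ℝ => x ^ m := Real.continuous_rpow_const hm.le
  have : Continuous fun σ : ℝ => (v (r * σ)) ^ m := h1.comp (by fun_prop)
  fun_prop

lemma mul_mem_aux {r σ : ℝ} (hr : r ∈ Icc 0 L) (hs : σ ∈ Icc (0:ℝ) 1) : r * σ ∈ Icc 0 L :=
  ⟨mul_nonneg hr.1 hs.1, (mul_le_of_le_one_right hr.1 hs.2).trans hr.2⟩

lemma opA_nonneg {v : ℝ → ℝ} (hv0 : ∀ t ∈ Icc 0 L, 0 ≤ v t) {r : ℝ} (hr : r ∈ Icc 0 L) :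
    0 ≤ opA n m v r := by
  refine mul_nonneg hr.1 (intervalIntegral.integral_nonneg zero_le_one fun σ hs => ?_)
  exact mul_nonneg (pow_nonneg hs.1 _) (Real.rpow_nonneg (hv0 _ (mul_mem_aux hr hs)) _)

lemma opA_mono (hm : 0 < m) {v w : ℝ → ℝ} (hv : Continuous v) (hw : Continuous w)
    (hv0 : ∀ t ∈ Icc 0 L, 0 ≤ v t) (hvw : ∀ t ∈ Icc 0 L, v t ≤ w t) {r : ℝ} (hr : r ∈ Icc 0 L) :
    opA n m v r ≤ opA n m w r := by
  refine mul_le_mul_of_nonneg_left (intervalIntegral.integral_mono_on zero_le_one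
    ((integrand_cont hm hv r).intervalIntegrable _ _)
    ((integrand_cont hm hw r).intervalIntegrable _ _) fun σ hs => ?_) hr.1
  exact mul_le_mul_of_nonneg_left (Real.rpow_le_rpow (hv0 _ (mul_mem_aux hr hs))
    (hvw _ (mul_mem_aux hr hs)) hm.le) (pow_nonneg hs.1 _)

lemma opH_nonneg {v : ℝ → ℝ} (hv0 : ∀ t ∈ Icc 0 L, 0 ≤ v t) {r : ℝ} (hr : r ∈ Icc 0 L) :
    0 ≤ opH n m v r := Real.rpow_nonneg (opA_nonneg hv0 hr) _

lemma opH_mono (hm : 0 < m) {v w : ℝ → ℝ} (hv : Continuous v) (hw : Continuous w)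
    (hv0 : ∀ t ∈ Icc 0 L, 0 ≤ v t) (hvw : ∀ t ∈ Icc 0 L, v t ≤ w t) {r : ℝ} (hr : r ∈ Icc 0 L) :
    opH n m v r ≤ opH n m w r :=
  Real.rpow_le_rpow (opA_nonneg hv0 hr) (opA_mono hm hv hw hv0 hvw hr) (inv_nonneg.2 hm.le)

lemma opA_smul {v : ℝ → ℝ} (hv0 : ∀ t ∈ Icc 0 L, 0 ≤ v t) {c : ℝ} (hc : 0 ≤ c)
    {r : ℝ} (hr : r ∈ Icc 0 L) : opA n m (fun t => c * v t) r = c ^ m * opA n m v r := by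
  unfold opA
  have : ∫ σ in (0:ℝ)..1, σ ^ n * (c * v (r * σ)) ^ m
      = ∫ σ in (0:ℝ)..1, c ^ m * (σ ^ n * (v (r * σ)) ^ m) := by
    refine intervalIntegral.integral_congr fun σ hs => ?_
    rw [uIcc_of_le zero_le_one] at hs
    show σ ^ n * (c * v (r * σ)) ^ m = _
    rw [Real.mul_rpow hc (hv0 _ (mul_mem_aux hr hs))]; ring
  rw [this, intervalIntegral.integral_const_mul]; ring

lemma opH_smul (hm : 0 < m) {v : ℝ → ℝ} (hv0 : ∀ t ∈ Icc 0 L, 0 ≤ v t) {c : ℝ} (hc : 0 ≤ c)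
    {r : ℝ} (hr : r ∈ Icc 0 L) : opH n m (fun t => c * v t) r = c * opH n m v r := by
  unfold opH
  rw [opA_smul hv0 hc hr, Real.mul_rpow (Real.rpow_nonneg hc _) (opA_nonneg hv0 hr),
    Real.rpow_rpow_inv hc hm.ne']

lemma opH_le (hm : 0 < m) {v : ℝ → ℝ} (hv : Continuous v)
    (hv0 : ∀ t ∈ Icc 0 L, 0 ≤ v t) (hv1 : ∀ t ∈ Icc 0 L, v t ≤ 1) {r : ℝ} (hr : r ∈ Icc 0 L) :
    opH n m v r ≤ L ^ m⁻¹ := by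
  refine Real.rpow_le_rpow (opA_nonneg hv0 hr) ?_ (inv_nonneg.2 hm.le)
  have : ∫ σ in (0:ℝ)..1, σ ^ n * (v (r * σ)) ^ m ≤ ∫ σ in (0:ℝ)..1, (1:ℝ) := by
    refine intervalIntegral.integral_mono_on zero_le_one
      ((integrand_cont hm hv r).intervalIntegrable _ _)
      (continuous_const.intervalIntegrable _ _) fun σ hs => ?_
    exact mul_le_one₀ (pow_le_one₀ hs.1 hs.2) (Real.rpow_nonneg (hv0 _ (mul_mem_aux hr hs)) _)
      (Real.rpow_le_one (hv0 _ (mul_mem_aux hr hs)) (hv1 _ (mul_mem_aux hr hs)) hm.le)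
  calc opA n m v r ≤ r * 1 := mul_le_mul_of_nonneg_left (by simpa using this) hr.1
    _ ≤ L := by linarith [hr.2]

lemma clamp_mem (hL : 0 < L) (t : ℝ) : max 0 (min L t) ∈ Icc 0 L :=
  ⟨le_max_left _ _, max_le hL.le (min_le_left _ _)⟩

lemma clamp_eq {t : ℝ} (ht : t ∈ Icc 0 L) : max 0 (min L t) = t := by
  rw [min_eq_right ht.2, max_eq_right ht.1]

lemma opT_eq {v : ℝ → ℝ} {t : ℝ} (ht : t ∈ Icc 0 L) :
    opT n m L v t = ∫ r in t..L, opH n m v r := by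
  unfold opT; rw [clamp_eq ht]

lemma opT_cont (hm : 0 < m) {v : ℝ → ℝ} (hv : Continuous v) : Continuous (opT n m L v) := by
  have h : opT n m L v = fun t => - ∫ r in L..(max 0 (min L t)), opH n m v r := by
    ext t; unfold opT; rw [intervalIntegral.integral_symm]
  rw [h]
  have := intervalIntegral.continuous_primitive
    (fun a b => (opH_cont (n := n) hm hv).intervalIntegrable a b (μ := volume)) L
  exact (this.comp (by fun_prop : Continuous fun t : ℝ => max 0 (min L t))).neg

lemma opT_nonneg {v : ℝ → ℝ} (hv0 : ∀ t ∈ Icc 0 L, 0 ≤ v t) {t : ℝ} (ht : t ∈ Icc 0 L) :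
    0 ≤ opT n m L v t := by
  rw [opT_eq ht]
  exact intervalIntegral.integral_nonneg ht.2 fun r hr => opH_nonneg hv0 ⟨ht.1.trans hr.1, hr.2⟩

lemma opT_mono (hm : 0 < m) {v w : ℝ → ℝ} (hv : Continuous v) (hw : Continuous w)
    (hv0 : ∀ t ∈ Icc 0 L, 0 ≤ v t) (hvw : ∀ t ∈ Icc 0 L, v t ≤ w t) {t : ℝ} (ht : t ∈ Icc 0 L) :
    opT n m L v t ≤ opT n m L w t := by
  rw [opT_eq ht, opT_eq ht]
  exact intervalIntegral.integral_mono_on ht.2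
    ((opH_cont hm hv).intervalIntegrable _ _) ((opH_cont hm hw).intervalIntegrable _ _)
    fun r hr => opH_mono hm hv hw hv0 hvw ⟨ht.1.trans hr.1, hr.2⟩

lemma opT_smul (hm : 0 < m) {v : ℝ → ℝ} (hv0 : ∀ t ∈ Icc 0 L, 0 ≤ v t) {c : ℝ} (hc : 0 ≤ c)
    {t : ℝ} (ht : t ∈ Icc 0 L) : opT n m L (fun t => c * v t) t = c * opT n m L v t := by
  rw [opT_eq ht, opT_eq ht, ← intervalIntegral.integral_const_mul]
  refine intervalIntegral.integral_congr fun r hr => ?_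
  rw [uIcc_of_le ht.2] at hr
  exact opH_smul hm hv0 hc ⟨ht.1.trans hr.1, hr.2⟩

lemma opT_anti (hm : 0 < m) {v : ℝ → ℝ} (hv : Continuous v)
    (hv0 : ∀ t ∈ Icc 0 L, 0 ≤ v t) {s t : ℝ} (hs : s ∈ Icc 0 L) (ht : t ∈ Icc 0 L) (hst : s ≤ t) :
    opT n m L v t ≤ opT n m L v s := by
  rw [opT_eq hs, opT_eq ht]
  have hi := fun a b => (opH_cont (n := n) hm hv).intervalIntegrable a b (μ := volume)
  rw [← intervalIntegral.integral_add_adjacent_intervals (hi s t) (hi t L)]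
  have := intervalIntegral.integral_nonneg (μ := volume) hst fun r hr =>
    opH_nonneg (n := n) (m := m) hv0 (r := r) ⟨hs.1.trans hr.1, hr.2.trans ht.2⟩
  linarith

lemma opT_sub_le (hm : 0 < m) {v : ℝ → ℝ} (hv : Continuous v)
    (hv0 : ∀ t ∈ Icc 0 L, 0 ≤ v t) (hv1 : ∀ t ∈ Icc 0 L, v t ≤ 1)
    {s t : ℝ} (hs : s ∈ Icc 0 L) (ht : t ∈ Icc 0 L) (hst : s ≤ t) :
    opT n m L v s - opT n m L v t ≤ L ^ m⁻¹ * (t - s) := by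
  rw [opT_eq hs, opT_eq ht]
  have hi := fun a b => (opH_cont (n := n) hm hv).intervalIntegrable a b (μ := volume)
  rw [← intervalIntegral.integral_add_adjacent_intervals (hi s t) (hi t L)]
  have := intervalIntegral.integral_mono_on (μ := volume) hst (hi s t)
    (intervalIntegrable_const (c := L ^ m⁻¹)) fun r hr =>
    opH_le (n := n) (m := m) hm hv hv0 hv1 (r := r) ⟨hs.1.trans hr.1, hr.2.trans ht.2⟩
  simp only [intervalIntegral.integral_const, smul_eq_mul] at this
  linarith

lemma opT_le (hm : 0 < m) {v : ℝ → ℝ} (hv : Continuous v)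
    (hv0 : ∀ t ∈ Icc 0 L, 0 ≤ v t) (hv1 : ∀ t ∈ Icc 0 L, v t ≤ 1)
    {t : ℝ} (ht : t ∈ Icc 0 L) :
    opT n m L v t ≤ L ^ m⁻¹ * (L - t) := by
  have h := opT_sub_le (n := n) hm hv hv0 hv1 ht ⟨ht.1.trans ht.2, le_rfl⟩ ht.2
  have : opT n m L v L = 0 := by
    rw [opT_eq ⟨ht.1.trans ht.2, le_rfl⟩]; simp
  linarith

lemma opT_tendsto (hm : 0 < m) {v : ℕ → ℝ → ℝ} {w : ℝ → ℝ} (hv : ∀ k, Continuous (v k))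
    {M : ℝ} (hM : 0 < M)
    (hv0 : ∀ k, ∀ t ∈ Icc 0 L, 0 ≤ v k t) (hv1 : ∀ k, ∀ t ∈ Icc 0 L, v k t ≤ M)
    (hlim : ∀ t ∈ Icc 0 L, Tendsto (fun k => v k t) atTop (𝓝 (w t)))
    {t : ℝ} (ht : t ∈ Icc 0 L) :
    Tendsto (fun k => opT n m L (v k) t) atTop (𝓝 (opT n m L w t)) := by
  have hc : Continuous fun x : ℝ => x ^ m := Real.continuous_rpow_const hm.le
  have hc' : Continuous fun x : ℝ => x ^ m⁻¹ := Real.continuous_rpow_const (inv_nonneg.2 hm.le)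
  have hA : ∀ r ∈ Icc 0 L, Tendsto (fun k => opA n m (v k) r) atTop (𝓝 (opA n m w r)) := by
    intro r hr
    refine Tendsto.const_mul _ ?_
    refine intervalIntegral.tendsto_integral_filter_of_dominated_convergence (fun _ => M ^ m)
      (Eventually.of_forall fun k => (integrand_cont hm (hv k) r).aestronglyMeasurable)
      (Eventually.of_forall fun k => Eventually.of_forall fun σ hs => ?_)
      (continuous_const.intervalIntegrable _ _)
      (Eventually.of_forall fun σ hs => ?_)
    · rw [uIoc_of_le zero_le_one] at hs
      have hs' := Ioc_subset_Icc_self hs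
      have h0 := hv0 k _ (mul_mem_aux hr hs')
      rw [Real.norm_of_nonneg (mul_nonneg (pow_nonneg hs'.1 _) (Real.rpow_nonneg h0 _))]
      calc _ ≤ 1 * (v k (r * σ)) ^ m := mul_le_mul_of_nonneg_right (pow_le_one₀ hs'.1 hs'.2)
            (Real.rpow_nonneg h0 _)
        _ ≤ M ^ m := by
          rw [one_mul]; exact Real.rpow_le_rpow h0 (hv1 k _ (mul_mem_aux hr hs')) hm.le
    · rw [uIoc_of_le zero_le_one] at hs
      have hs' := Ioc_subset_Icc_self hs
      exact ((hc.tendsto _).comp (hlim _ (mul_mem_aux hr hs'))).const_mul _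
  have hH : ∀ r ∈ Icc 0 L, Tendsto (fun k => opH n m (v k) r) atTop (𝓝 (opH n m w r)) :=
    fun r hr => (hc'.tendsto _).comp (hA r hr)
  simp_rw [opT_eq ht]
  refine intervalIntegral.tendsto_integral_filter_of_dominated_convergence
      (fun _ => M * L ^ m⁻¹)
      (Eventually.of_forall fun k => (opH_cont hm (hv k)).aestronglyMeasurable)
      (Eventually.of_forall fun k => Eventually.of_forall fun r hr => ?_)
      (continuous_const.intervalIntegrable _ _)
      (Eventually.of_forall fun r hr => ?_)
  · rw [uIoc_of_le ht.2] at hr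
    have hr' : r ∈ Icc 0 L := ⟨ht.1.trans hr.1.le, hr.2⟩
    rw [Real.norm_of_nonneg (opH_nonneg (hv0 k) hr')]
    have h1 : opH n m (v k) r = M * opH n m (fun t => M⁻¹ * v k t) r := by
      rw [opH_smul hm (hv0 k) (inv_nonneg.2 hM.le) hr', mul_inv_cancel_left₀ hM.ne']
    rw [h1]
    refine mul_le_mul_of_nonneg_left (opH_le hm (by fun_prop) (fun t ht => ?_) (fun t ht => ?_) hr')
      hM.le
    · exact mul_nonneg (inv_nonneg.2 hM.le) (hv0 k t ht)
    · rw [inv_mul_le_iff₀ hM, mul_one]; exact hv1 k t ht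
  · rw [uIoc_of_le ht.2] at hr
    exact hH r ⟨ht.1.trans hr.1.le, hr.2⟩

lemma opH_lt (hm : 0 < m) {a b : ℝ → ℝ} (ha : Continuous a) (hb : Continuous b)
    (hb0 : ∀ t ∈ Icc 0 L, 0 ≤ b t) (hba : ∀ t ∈ Icc 0 L, b t ≤ a t)
    {r x : ℝ} (hr : r ∈ Icc 0 L) (hr0 : 0 < r) (hx : x ∈ Ico 0 r) (hlt : b x < a x) :
    opH n m b r < opH n m a r := by
  refine Real.rpow_lt_rpow (opA_nonneg hb0 hr) ?_ (inv_pos.2 hm)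
  refine mul_lt_mul_of_pos_left ?_ hr0
  obtain ⟨y, hy0, hyr, hylt⟩ : ∃ y, 0 < y ∧ y ≤ r ∧ b y < a y := by
    have ho : IsOpen {y | b y < a y} := isOpen_lt hb ha
    have h1 : ∀ᶠ y in 𝓝[>] x, b y < a y := nhdsWithin_le_nhds (ho.mem_nhds hlt)
    have h2 : ∀ᶠ y in 𝓝[>] x, y < r := nhdsWithin_le_nhds (Iio_mem_nhds hx.2)
    have h3 : ∀ᶠ y in 𝓝[>] x, x < y := self_mem_nhdsWithin
    obtain ⟨y, h1, h2, h3⟩ := (h1.and (h2.and h3)).exists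
    exact ⟨y, hx.1.trans_lt h3, h2.le, h1⟩
  have hry : r * (y / r) = y := mul_div_cancel₀ _ hr0.ne'
  refine intervalIntegral.integral_lt_integral_of_continuousOn_of_le_of_exists_lt zero_lt_one
    (integrand_cont hm hb r).continuousOn (integrand_cont hm ha r).continuousOn
    (fun σ hs => ?_) ⟨y / r, ⟨by positivity, (div_le_one hr0).2 hyr⟩, ?_⟩
  · have hs' := Ioc_subset_Icc_self hs
    exact mul_le_mul_of_nonneg_left (Real.rpow_le_rpow (hb0 _ (mul_mem_aux hr hs'))
      (hba _ (mul_mem_aux hr hs')) hm.le) (pow_nonneg hs'.1 _)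
  · simp only [hry]
    exact mul_lt_mul_of_pos_left (Real.rpow_lt_rpow (hb0 _ ⟨hy0.le, hyr.trans hr.2⟩) hylt hm)
      (by positivity)

lemma opT_strong (hm : 0 < m) (hL : 0 < L) {a b : ℝ → ℝ} (ha : Continuous a) (hb : Continuous b)
    (hb0 : ∀ t ∈ Icc 0 L, 0 ≤ b t) (hba : ∀ t ∈ Icc 0 L, b t ≤ a t)
    {x : ℝ} (hx : x ∈ Ico 0 L) (hlt : b x < a x) :
    ∃ ε > 0, ∀ t ∈ Icc 0 L, opT n m L b t + ε * (L - t) ≤ opT n m L a t := by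
  have hLL : L ∈ Icc 0 L := ⟨hL.le, le_rfl⟩
  have h1 := opH_lt (n := n) hm ha hb hb0 hba hLL hL hx hlt
  set c := (opH n m a L - opH n m b L) / 2 with hc
  have hcpos : 0 < c := by rw [hc]; linarith
  have hca := opH_cont (n := n) hm ha
  have hcb := opH_cont (n := n) hm hb
  have h2 : ∀ᶠ r in 𝓝 L, opH n m b r + c < opH n m a r :=
    (isOpen_lt (hcb.add continuous_const) hca).mem_nhds
      (by show opH n m b L + c < opH n m a L; rw [hc]; linarith)
  obtain ⟨δ, hδ, hball⟩ := Metric.eventually_nhds_iff.1 h2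
  set e := min (δ / 2) L with he
  have hepos : 0 < e := lt_min (by linarith) hL
  have heL : e ≤ L := min_le_right _ _
  have heδ : e < δ := (min_le_left _ _).trans_lt (by linarith)
  refine ⟨c * e / L, by positivity, fun t ht => ?_⟩
  rw [opT_eq ht, opT_eq ht]
  have hia := fun x y => hca.intervalIntegrable x y (μ := volume)
  have hib := fun x y => hcb.intervalIntegrable x y (μ := volume)
  set s := max t (L - e) with hs
  have hts : t ≤ s := le_max_left _ _
  have hsL : s ≤ L := max_le ht.2 (by linarith)
  rw [← intervalIntegral.integral_add_adjacent_intervals (hia t s) (hia s L),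
    ← intervalIntegral.integral_add_adjacent_intervals (hib t s) (hib s L)]
  have h3 := intervalIntegral.integral_mono_on (μ := volume) hts (hib t s) (hia t s) fun r hr =>
    opH_mono (n := n) hm hb ha hb0 hba (r := r) ⟨ht.1.trans hr.1, hr.2.trans hsL⟩
  have h4 := intervalIntegral.integral_mono_on (μ := volume) hsL
    ((hib s L).add (intervalIntegrable_const (c := c))) (hia s L) fun r hr => by
      refine (hball ?_).le
      rw [Real.dist_eq, abs_sub_comm, abs_of_nonneg (by linarith [hr.2])]
      have := (le_max_right t (L - e)).trans hr.1
      linarith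
  rw [intervalIntegral.integral_add (hib s L) (continuous_const.intervalIntegrable _ _)] at h4
  simp only [intervalIntegral.integral_const, smul_eq_mul] at h4
  have h5 : c * e / L * (L - t) ≤ (L - s) * c := by
    have h6 : e * (L - t) ≤ (L - s) * L := by
      rcases max_cases t (L - e) with ⟨h, h'⟩ | ⟨h, h'⟩
      · rw [hs, h, mul_comm]
        exact mul_le_mul_of_nonneg_left heL (by linarith [ht.2])
      · rw [hs, h]; nlinarith [ht.1]
    rw [div_mul_eq_mul_div, div_le_iff₀ hL]
    nlinarith
  linarith

lemma ascoli_aux (hL : 0 < L) (f : ℕ → ℝ → ℝ) (B M : ℝ)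
    (hlip : ∀ k, ∀ s ∈ Icc 0 L, ∀ t ∈ Icc 0 L, |f k s - f k t| ≤ B * |s - t|)
    (hbd : ∀ k, ∀ t ∈ Icc 0 L, f k t ∈ Icc 0 M) :
    ∃ (ψ : ℕ → ℕ) (y : ℝ → ℝ), StrictMono ψ ∧ Continuous y ∧
      ∀ t ∈ Icc 0 L, Tendsto (fun k => f (ψ k) t) atTop (𝓝 (y t)) := by
  have hl : ∀ k, LipschitzWith (Real.toNNReal B) (fun x : Icc (0:ℝ) L => f k x) := by
    intro k
    refine LipschitzWith.of_dist_le_mul fun x z => ?_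
    rw [Real.dist_eq, Subtype.dist_eq, Real.dist_eq]
    refine (hlip k x x.2 z z.2).trans ?_
    exact mul_le_mul_of_nonneg_right (Real.le_coe_toNNReal B) (abs_nonneg _)
  let F : ℕ → BoundedContinuousFunction (Icc (0:ℝ) L) ℝ := fun k =>
    BoundedContinuousFunction.mkOfCompact ⟨fun x => f k x, (hl k).continuous⟩
  have hcomp : IsCompact (closure (range F)) := by
    refine BoundedContinuousFunction.arzela_ascoli (Icc 0 M) isCompact_Icc (range F) ?_ ?_
    · rintro _ x ⟨k, rfl⟩
      exact hbd k x x.2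
    · refine (LipschitzWith.uniformEquicontinuous _ (Real.toNNReal B) ?_).equicontinuous
      rintro ⟨_, k, rfl⟩
      exact hl k
  obtain ⟨G, -, ψ, hψ, hlim⟩ := hcomp.tendsto_subseq (x := F)
    (fun k => subset_closure (mem_range_self k))
  refine ⟨ψ, fun t => G (projIcc 0 L hL.le t), hψ, G.continuous.comp continuous_projIcc, ?_⟩
  intro t ht
  have h2 : Tendsto (fun k => (F ∘ ψ) k ⟨t, ht⟩) atTop (𝓝 (G ⟨t, ht⟩)) :=
    ((BoundedContinuousFunction.tendsto_iff_tendstoUniformly.1 hlim).tendsto_at ⟨t, ht⟩)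
  simp only [projIcc_of_mem hL.le ht]
  exact h2

/-- Collatz–Wielandt set. -/
def cwSet (n : ℕ) (m L : ℝ) : Set ℝ :=
  {μ | ∃ v : ℝ → ℝ, Continuous v ∧ (∀ t ∈ Icc 0 L, 0 ≤ v t) ∧ (∀ t ∈ Icc 0 L, v t ≤ 1) ∧
    v 0 = 1 ∧ ∀ t ∈ Icc 0 L, μ * v t ≤ opT n m L v t}

lemma cwSet_bdd (hm : 0 < m) (hL : 0 < L) {μ : ℝ} (h : μ ∈ cwSet n m L) : μ ≤ L ^ m⁻¹ * L := by
  obtain ⟨v, hv, h0, h1, hv0, h⟩ := h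
  have hz : (0:ℝ) ∈ Icc 0 L := ⟨le_rfl, hL.le⟩
  have := (h 0 hz).trans (opT_le hm hv h0 h1 hz)
  rw [hv0] at this; linarith

lemma cwSet_pos (hm : 0 < m) (hL : 0 < L) : ∃ μ ∈ cwSet n m L, 0 < μ := by
  have hc : Continuous fun t : ℝ => max 0 ((L - t) / L) := by fun_prop
  have hval : ∀ t ∈ Icc 0 L, max 0 ((L - t) / L) = (L - t) / L := fun t ht =>
    max_eq_right (div_nonneg (by linarith [ht.2]) hL.le)
  obtain ⟨ε, hε, h⟩ := opT_strong (n := n) hm hL (a := fun t : ℝ => max 0 ((L - t) / L))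
    (b := fun _ => 0) hc continuous_const (fun _ _ => le_rfl) (fun t _ => le_max_left _ _)
    (x := 0) ⟨le_rfl, hL⟩ (by simp [hL.ne'])
  refine ⟨ε * L, ⟨_, hc, fun t _ => le_max_left _ _, fun t ht => ?_, by simp [hL.ne'],
    fun t ht => ?_⟩, by positivity⟩
  · rw [hval t ht, div_le_one hL]; linarith [ht.1]
  · have h1 := h t ht
    have h2 := opT_nonneg (n := n) (m := m) (L := L) (v := fun _ => 0) (fun _ _ => le_rfl) ht
    simp only [hval t ht]
    have : ε * L * ((L - t) / L) = ε * (L - t) := by field_simp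
    rw [this]; linarith

lemma exists_eigen (hm : 0 < m) (hL : 0 < L) :
    ∃ (μ : ℝ) (y : ℝ → ℝ), 0 < μ ∧ Continuous y ∧ (∀ t ∈ Icc 0 L, 0 ≤ y t) ∧ 0 < y 0 ∧
      ∀ t ∈ Icc 0 L, μ * y t = opT n m L y t := by
  set B := L ^ m⁻¹ with hB
  have hBpos : 0 < B := Real.rpow_pos_of_pos hL _
  have hz : (0:ℝ) ∈ Icc 0 L := ⟨le_rfl, hL.le⟩
  have hLL : L ∈ Icc 0 L := ⟨hL.le, le_rfl⟩
  have hbdd : BddAbove (cwSet n m L) := ⟨_, fun μ h => cwSet_bdd hm hL h⟩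
  obtain ⟨μ₀, hμ₀, hμ₀pos⟩ := cwSet_pos (n := n) hm hL
  obtain ⟨μs, -, hμlim, hμmem⟩ := exists_seq_tendsto_sSup ⟨μ₀, hμ₀⟩ hbdd
  set μ := sSup (cwSet n m L) with hμ
  have hμpos : 0 < μ := hμ₀pos.trans_le (le_csSup hbdd hμ₀)
  choose v hv hv0 hv1 hvz hvT using hμmem
  have hy0 : ∀ k, ∀ t ∈ Icc 0 L, 0 ≤ opT n m L (v k) t := fun k t ht => opT_nonneg (hv0 k) ht
  have hyM : ∀ k, ∀ t ∈ Icc 0 L, opT n m L (v k) t ≤ B * L := fun k t ht =>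
    (opT_le hm (hv k) (hv0 k) (hv1 k) ht).trans
      (mul_le_mul_of_nonneg_left (by linarith [ht.1]) hBpos.le)
  obtain ⟨ψ, y, hψ, hyc, hylim⟩ := ascoli_aux hL (fun k => opT n m L (v k)) B (B * L) (by
    intro k s hs t ht
    rcases le_total s t with hst | hst
    · have h1 := opT_anti (n := n) hm (hv k) (hv0 k) hs ht hst
      have h2 := opT_sub_le (n := n) hm (hv k) (hv0 k) (hv1 k) hs ht hst
      rw [abs_of_nonneg (by linarith), abs_sub_comm, abs_of_nonneg (by linarith)]; exact h2
    · have h1 := opT_anti (n := n) hm (hv k) (hv0 k) ht hs hst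
      have h2 := opT_sub_le (n := n) hm (hv k) (hv0 k) (hv1 k) ht hs hst
      rw [abs_sub_comm, abs_of_nonneg (by linarith), abs_of_nonneg (by linarith)]; exact h2)
    (fun k t ht => ⟨hy0 k t ht, hyM k t ht⟩)
  have hμψ : Tendsto (fun k => μs (ψ k)) atTop (𝓝 μ) := hμlim.comp hψ.tendsto_atTop
  have hy_nonneg : ∀ t ∈ Icc 0 L, 0 ≤ y t := fun t ht =>
    ge_of_tendsto' (hylim t ht) fun k => hy0 _ t ht
  have hy_le : ∀ t ∈ Icc 0 L, y t ≤ B * L := fun t ht =>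
    le_of_tendsto' (hylim t ht) fun k => hyM _ t ht
  have hyz : μ ≤ y 0 := le_of_tendsto_of_tendsto' hμψ (hylim 0 hz) fun k => by
    have := hvT (ψ k) 0 hz
    rwa [hvz, mul_one] at this
  have hyzpos : 0 < y 0 := hμpos.trans_le hyz
  have hμs_ev : ∀ᶠ k in atTop, 0 < μs (ψ k) := hμψ.eventually (lt_mem_nhds hμpos)
  have hTlim : ∀ t ∈ Icc 0 L, Tendsto (fun k => opT n m L (opT n m L (v (ψ k))) t) atTop
      (𝓝 (opT n m L y t)) := fun t ht =>
    opT_tendsto (v := fun k => opT n m L (v (ψ k))) hm (fun k => opT_cont hm (hv _))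
      (mul_pos hBpos hL) (fun k => hy0 _) (fun k => hyM _) hylim ht
  have hsub : ∀ t ∈ Icc 0 L, μ * y t ≤ opT n m L y t := fun t ht => by
    refine le_of_tendsto_of_tendsto (hμψ.mul (hylim t ht)) (hTlim t ht) ?_
    filter_upwards [hμs_ev] with k hk
    rw [← opT_smul hm (hv0 (ψ k)) hk.le ht]
    exact opT_mono hm (continuous_const.mul (hv _)) (opT_cont hm (hv _))
      (fun t ht => mul_nonneg hk.le (hv0 _ t ht)) (hvT (ψ k)) ht
  refine ⟨μ, y, hμpos, hyc, hy_nonneg, hyzpos, ?_⟩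
  by_contra hne
  push Not at hne
  obtain ⟨x, hx, hxne⟩ := hne
  have hxlt : μ * y x < opT n m L y x := lt_of_le_of_ne (hsub x hx) hxne
  have hTL : opT n m L y L = 0 := by rw [opT_eq hLL]; simp
  have hxL : x < L := by
    refine lt_of_le_of_ne hx.2 fun h => ?_
    rw [h, hTL] at hxlt
    have := mul_nonneg hμpos.le (hy_nonneg L hLL)
    linarith
  have hTc := opT_cont (n := n) (L := L) hm hyc
  have hTn : ∀ t ∈ Icc 0 L, 0 ≤ opT n m L y t := fun t ht => opT_nonneg hy_nonneg ht
  obtain ⟨ε, hε, hst⟩ := opT_strong (n := n) hm hL (a := opT n m L y) (b := fun t => μ * y t)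
    hTc (by fun_prop) (fun t ht => mul_nonneg hμpos.le (hy_nonneg t ht)) hsub ⟨hx.1, hxL⟩ hxlt
  have hM : 0 < B * L := mul_pos hBpos hL
  have hTle : ∀ t ∈ Icc 0 L, opT n m L y t ≤ (B * L) * (B * (L - t)) := fun t ht => by
    have h1 : opT n m L y t = (B * L) * opT n m L (fun t => (B * L)⁻¹ * y t) t := by
      rw [opT_smul hm hy_nonneg (inv_nonneg.2 hM.le) ht, mul_inv_cancel_left₀ hM.ne']
    rw [h1]
    refine mul_le_mul_of_nonneg_left (opT_le hm (by fun_prop) (fun t ht => ?_) (fun t ht => ?_) ht)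
      hM.le
    · exact mul_nonneg (inv_nonneg.2 hM.le) (hy_nonneg t ht)
    · rw [inv_mul_le_iff₀ hM, mul_one]; exact hy_le t ht
  set ε' := ε / (B * L * B) with hε'
  have hε'pos : 0 < ε' := by positivity
  have hT0 : 0 < opT n m L y 0 := (mul_pos hμpos hyzpos).trans_le (hsub 0 hz)
  have hmem : μ + ε' ∈ cwSet n m L := by
    refine ⟨fun t => (opT n m L y 0)⁻¹ * opT n m L y t, by fun_prop, fun t ht => ?_, fun t ht => ?_,
      inv_mul_cancel₀ hT0.ne', fun t ht => ?_⟩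
    · exact mul_nonneg (inv_nonneg.2 hT0.le) (hTn t ht)
    · rw [inv_mul_le_iff₀ hT0, mul_one]; exact opT_anti hm hyc hy_nonneg hz ht ht.1
    · rw [opT_smul hm hTn (inv_nonneg.2 hT0.le) ht, mul_left_comm]
      refine mul_le_mul_of_nonneg_left ?_ (inv_nonneg.2 hT0.le)
      have h1 := hst t ht
      rw [opT_smul hm hy_nonneg hμpos.le ht] at h1
      have h2 : ε' * opT n m L y t ≤ ε * (L - t) := by
        calc ε' * opT n m L y t ≤ ε' * ((B * L) * (B * (L - t))) :=
              mul_le_mul_of_nonneg_left (hTle t ht) hε'pos.le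
          _ = ε * (L - t) := by rw [hε']; field_simp
      linarith
  have := le_csSup hbdd hmem
  linarith

lemma eigen_data (hm : 0 < m) (hL : 0 < L) :
    ∃ (lam : ℝ) (u h : ℝ → ℝ), 0 < lam ∧ Continuous u ∧ Continuous h ∧
      (∀ t ∈ Icc 0 L, 0 ≤ u t) ∧ 0 < u 0 ∧ (∀ t ∈ Icc 0 L, 0 ≤ h t) ∧ (∀ t ∈ Ioc 0 L, 0 < h t) ∧
      (∀ t ∈ Icc 0 L, u t = ∫ r in t..L, h r) ∧
      (∀ r ∈ Icc 0 L, r ^ n * h r ^ m = lam * ∫ τ in (0:ℝ)..r, τ ^ n * u τ ^ m) := by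
  obtain ⟨μ, y, hμ, hyc, hy0, hyz, hT⟩ := exists_eigen (n := n) hm hL
  have hμi : 0 < μ⁻¹ := inv_pos.2 hμ
  refine ⟨(μ⁻¹) ^ m, y, fun r => μ⁻¹ * opH n m y r, Real.rpow_pos_of_pos hμi _, hyc,
    continuous_const.mul (opH_cont hm hyc), hy0, hyz,
    fun t ht => mul_nonneg hμi.le (opH_nonneg hy0 ht), fun t ht => mul_pos hμi ?_,
    fun t ht => ?_, fun r hr => ?_⟩
  · have ht' := Ioc_subset_Icc_self ht
    exact (opH_nonneg (v := fun _ => 0) (fun _ _ => le_rfl) ht').trans_lt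
      (opH_lt hm hyc continuous_const (fun _ _ => le_rfl) hy0 ht' ht.1 ⟨le_rfl, ht.1⟩ hyz)
  · rw [intervalIntegral.integral_const_mul, ← opT_eq ht, ← hT t ht, inv_mul_cancel_left₀ hμ.ne']
  · simp only
    rw [Real.mul_rpow hμi.le (opH_nonneg hy0 hr)]
    have h1 : opH n m y r ^ m = opA n m y r := by
      unfold opH; exact Real.rpow_inv_rpow (opA_nonneg hy0 hr) hm.ne'
    rw [h1, mul_left_comm]
    congr 1
    have h2 := intervalIntegral.mul_integral_comp_mul_left (a := 0) (b := 1)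
      (f := fun τ => τ ^ n * y τ ^ m) (c := r)
    rw [mul_zero, mul_one] at h2
    rw [← h2]
    unfold opA
    rw [mul_left_comm, ← intervalIntegral.integral_const_mul]
    congr 2
    ext σ
    rw [mul_pow]; ring

lemma swap_aux {c G : ℝ → ENNReal} (hc : Measurable c) (hG : Measurable G) :
    ∫⁻ t in Ioc 0 L, c t * ∫⁻ r in Ioc t L, G r ≤ ∫⁻ r in Ioc 0 L, G r * ∫⁻ t in Ioc 0 r, c t := by
  have hS : MeasurableSet {z : ℝ × ℝ | z.1 < z.2} := measurableSet_lt measurable_fst measurable_snd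
  have hmeas : Measurable (Function.uncurry fun t r : ℝ => (Ioi t).indicator (fun r => c t * G r) r) := by
    have : (Function.uncurry fun t r : ℝ => (Ioi t).indicator (fun r => c t * G r) r)
        = {z : ℝ × ℝ | z.1 < z.2}.indicator (fun z => c z.1 * G z.2) := by
      ext ⟨t, r⟩
      simp only [Function.uncurry, indicator, mem_Ioi]
      rfl
    rw [this]
    exact ((hc.comp measurable_fst).mul (hG.comp measurable_snd)).indicator hS
  calc ∫⁻ t in Ioc 0 L, c t * ∫⁻ r in Ioc t L, G r
      = ∫⁻ t in Ioc 0 L, ∫⁻ r in Ioc 0 L, (Ioi t).indicator (fun r => c t * G r) r := by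
        refine setLIntegral_congr_fun measurableSet_Ioc fun t ht => ?_
        rw [setLIntegral_indicator measurableSet_Ioi, ← lintegral_const_mul _ hG]
        congr 2
        ext r
        simp only [mem_Ioc, mem_inter_iff, mem_Ioi]
        constructor
        · rintro ⟨h1, h2⟩; exact ⟨h1, ht.1.trans h1, h2⟩
        · rintro ⟨h1, -, h2⟩; exact ⟨h1, h2⟩
    _ = ∫⁻ r in Ioc 0 L, ∫⁻ t in Ioc 0 L, (Ioi t).indicator (fun r => c t * G r) r :=
        lintegral_lintegral_swap hmeas.aemeasurable
    _ ≤ ∫⁻ r in Ioc 0 L, G r * ∫⁻ t in Ioc 0 r, c t := by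
        refine setLIntegral_mono' measurableSet_Ioc fun r hr => ?_
        have : ∀ t, (Ioi t).indicator (fun r => c t * G r) r
            = (Iio r).indicator (fun t => G r * c t) t := by
          intro t
          simp only [indicator, mem_Ioi, mem_Iio, mul_comm]
        simp_rw [this]
        rw [setLIntegral_indicator measurableSet_Iio, ← lintegral_const_mul _ hc]
        refine lintegral_mono_set ?_
        rintro t ⟨h1, h2⟩
        exact ⟨h2.1, le_of_lt h1⟩

lemma lip_deriv_bound {φ : ℝ → ℝ} {K : NNReal} (hφ : LipschitzWith K φ) (t : ℝ) :
    |deriv φ t| ≤ K := by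
  simpa using norm_deriv_le_of_lipschitz hφ (x₀ := t)

lemma lip_ftc {φ : ℝ → ℝ} {K : NNReal} (hφ : LipschitzWith K φ) (a b : ℝ) :
    ∫ t in a..b, deriv φ t = φ b - φ a :=
  ((hφ.lipschitzOnWith (s := uIcc a b)).absolutelyContinuousOnInterval).integral_deriv_eq_sub

lemma holder_aux (hm : 0 < m) {a b : ℝ} {D g : ℝ → ENNReal} (hD : Measurable D) (hg : Measurable g)
    (hg0 : ∀ r ∈ Ioc a b, g r ≠ 0) (hgt : ∀ r ∈ Ioc a b, g r ≠ ⊤) :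
    (∫⁻ r in Ioc a b, D r) ^ (m + 1)
      ≤ (∫⁻ r in Ioc a b, D r ^ (m + 1) * (g r) ^ (-m)) * (∫⁻ r in Ioc a b, g r) ^ m := by
  have hp : 0 < m + 1 := by linarith
  have hconj : (m + 1).HolderConjugate ((m + 1) / m) := by
    rw [Real.holderConjugate_iff]
    refine ⟨by linarith, ?_⟩
    field_simp
    ring
  have h := ENNReal.lintegral_mul_le_Lp_mul_Lq (volume.restrict (Ioc a b)) hconj
    (f := fun r => D r * (g r) ^ (-(m / (m + 1)))) (g := fun r => (g r) ^ (m / (m + 1)))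
    (by fun_prop) (by fun_prop)
  have e1 : ∫⁻ r in Ioc a b, ((fun r => D r * (g r) ^ (-(m / (m + 1)))) *
      fun r => (g r) ^ (m / (m + 1))) r = ∫⁻ r in Ioc a b, D r := by
    refine setLIntegral_congr_fun measurableSet_Ioc fun r hr => ?_
    simp only [Pi.mul_apply]
    rw [mul_assoc, ← ENNReal.rpow_add _ _ (hg0 r hr) (hgt r hr)]
    simp
  have e2 : ∫⁻ r in Ioc a b, (D r * (g r) ^ (-(m / (m + 1)))) ^ (m + 1)
      = ∫⁻ r in Ioc a b, D r ^ (m + 1) * (g r) ^ (-m) := by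
    refine lintegral_congr fun r => ?_
    rw [ENNReal.mul_rpow_of_nonneg _ _ hp.le, ← ENNReal.rpow_mul]
    congr 2
    field_simp
  have e3 : ∫⁻ r in Ioc a b, ((g r) ^ (m / (m + 1))) ^ ((m + 1) / m)
      = ∫⁻ r in Ioc a b, g r := by
    refine lintegral_congr fun r => ?_
    rw [← ENNReal.rpow_mul]
    have : m / (m + 1) * ((m + 1) / m) = 1 := by field_simp
    rw [this, ENNReal.rpow_one]
  rw [e1, e2, e3] at h
  refine (ENNReal.rpow_le_rpow h hp.le).trans_eq ?_
  rw [ENNReal.mul_rpow_of_nonneg _ _ hp.le, ← ENNReal.rpow_mul, ← ENNReal.rpow_mul]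
  have h1 : 1 / (m + 1) * (m + 1) = 1 := by field_simp
  have h2 : 1 / ((m + 1) / m) * (m + 1) = m := by field_simp
  rw [h1, h2, ENNReal.rpow_one]

lemma ofReal_intervalIntegral {f : ℝ → ℝ} {a b : ℝ} (hab : a ≤ b)
    (hf : IntervalIntegrable f volume a b) (h0 : ∀ x ∈ Ioc a b, 0 ≤ f x) :
    ENNReal.ofReal (∫ x in a..b, f x) = ∫⁻ x in Ioc a b, ENNReal.ofReal (f x) := by
  rw [intervalIntegral.integral_of_le hab, ofReal_integral_eq_lintegral_ofReal]
  · exact (intervalIntegrable_iff_integrableOn_Ioc_of_le hab).1 hf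
  · exact (ae_restrict_iff' measurableSet_Ioc).2 (Eventually.of_forall h0)

lemma deriv_pow_integrable {φ : ℝ → ℝ} {K : NNReal} (hφ : LipschitzWith K φ) {p : ℝ} (hp : 0 ≤ p)
    {w : ℝ → ℝ} (hw : Continuous w) (a b : ℝ) :
    IntervalIntegrable (fun t => w t * |deriv φ t| ^ p) volume a b := by
  refine IntervalIntegrable.continuousOn_mul ?_ hw.continuousOn
  refine (intervalIntegrable_const (c := (K:ℝ) ^ p)).mono_fun ?_ ?_
  · exact (((measurable_deriv φ).abs).pow_const p).aestronglyMeasurable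
  · refine Eventually.of_forall fun t => ?_
    simp only
    rw [Real.norm_of_nonneg (by positivity), Real.norm_of_nonneg (by positivity)]
    exact Real.rpow_le_rpow (abs_nonneg _) (lip_deriv_bound hφ t) hp

lemma hardy (hm : 0 < m) (hL : 0 < L) {lam : ℝ} {u h : ℝ → ℝ} (hlam : 0 < lam)
    (huc : Continuous u) (hhc : Continuous h) (hu0 : ∀ t ∈ Icc 0 L, 0 ≤ u t)
    (hh : ∀ t ∈ Ioc 0 L, 0 < h t)
    (hu : ∀ t ∈ Icc 0 L, u t = ∫ r in t..L, h r)
    (hF : ∀ r ∈ Icc 0 L, r ^ n * h r ^ m = lam * ∫ τ in (0:ℝ)..r, τ ^ n * u τ ^ m)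
    {φ : ℝ → ℝ} {K : NNReal} (hφ : LipschitzWith K φ) (hφL : φ L = 0) :
    lam * ∫ t in (0:ℝ)..L, t ^ n * |φ t| ^ (m + 1)
      ≤ ∫ t in (0:ℝ)..L, t ^ n * |deriv φ t| ^ (m + 1) := by
  have hp : 0 < m + 1 := by linarith
  have hrm : Continuous fun x : ℝ => x ^ m := Real.continuous_rpow_const hm.le
  have hrp : Continuous fun x : ℝ => x ^ (m + 1) := Real.continuous_rpow_const hp.le
  have hint1 : IntervalIntegrable (fun t => t ^ n * |φ t| ^ (m + 1)) volume 0 L := by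
    refine Continuous.intervalIntegrable ?_ _ _
    exact (continuous_pow n).mul (hrp.comp hφ.continuous.abs)
  have hint2 := deriv_pow_integrable hφ hp.le (continuous_pow n) 0 L
  have hDm : Measurable fun r => ‖deriv φ r‖ₑ := (measurable_deriv φ).enorm
  have hgm : Measurable fun r => ENNReal.ofReal (h r) := hhc.measurable.ennreal_ofReal
  have hg0 : ∀ r ∈ Ioc 0 L, ENNReal.ofReal (h r) ≠ 0 := fun r hr => by
    simpa using hh r hr
  -- step 1
  have step1 : ∀ t ∈ Ioc 0 L, ‖φ t‖ₑ ^ (m + 1) ≤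
      (∫⁻ r in Ioc t L, ‖deriv φ r‖ₑ ^ (m + 1) * (ENNReal.ofReal (h r)) ^ (-m)) *
        ENNReal.ofReal (u t ^ m) := by
    intro t ht
    have ht' := Ioc_subset_Icc_self ht
    have a1 : ‖φ t‖ₑ ≤ ∫⁻ r in Ioc t L, ‖deriv φ r‖ₑ := by
      have : φ t = - ∫ r in t..L, deriv φ r := by rw [lip_ftc hφ, hφL]; ring
      rw [this, enorm_neg, intervalIntegral.integral_of_le ht.2]
      exact enorm_integral_le_lintegral_enorm _
    have a2 : ∫⁻ r in Ioc t L, ENNReal.ofReal (h r) = ENNReal.ofReal (u t) := by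
      rw [hu t ht', ofReal_intervalIntegral ht.2 (hhc.intervalIntegrable _ _)
        fun x hx => (hh x ⟨ht.1.trans hx.1, hx.2⟩).le]
    refine (ENNReal.rpow_le_rpow a1 hp.le).trans ?_
    refine (holder_aux hm hDm hgm (fun r hr => hg0 r ⟨ht.1.trans hr.1, hr.2⟩)
      (fun r hr => ENNReal.ofReal_ne_top)).trans_eq ?_
    rw [a2, ENNReal.ofReal_rpow_of_nonneg (hu0 t ht') hm.le]
  have hGm : Measurable fun r => ‖deriv φ r‖ₑ ^ (m + 1) * (ENNReal.ofReal (h r)) ^ (-m) := by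
    fun_prop
  have hcc : Continuous fun t : ℝ => t ^ n * u t ^ m := (continuous_pow n).mul (hrm.comp huc)
  have hcm : Measurable fun t : ℝ => ENNReal.ofReal (t ^ n * u t ^ m) :=
    hcc.measurable.ennreal_ofReal
  have conv : ∀ (x : ℝ), ENNReal.ofReal (|x| ^ (m + 1)) = ‖x‖ₑ ^ (m + 1) := fun x => by
    rw [← ENNReal.ofReal_rpow_of_nonneg (abs_nonneg x) hp.le, Real.enorm_eq_ofReal_abs]
  have key : ENNReal.ofReal (∫ t in (0:ℝ)..L, t ^ n * |φ t| ^ (m + 1)) ≤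
      ENNReal.ofReal (lam⁻¹ * ∫ t in (0:ℝ)..L, t ^ n * |deriv φ t| ^ (m + 1)) := by
    rw [ENNReal.ofReal_mul (inv_nonneg.2 hlam.le),
      ofReal_intervalIntegral hL.le hint1 (fun x hx => by have := hx.1.le; positivity),
      ofReal_intervalIntegral hL.le hint2 (fun x hx => by have := hx.1.le; positivity)]
    calc ∫⁻ t in Ioc 0 L, ENNReal.ofReal (t ^ n * |φ t| ^ (m + 1))
        ≤ ∫⁻ t in Ioc 0 L, ENNReal.ofReal (t ^ n * u t ^ m) *
          ∫⁻ r in Ioc t L, ‖deriv φ r‖ₑ ^ (m + 1) * (ENNReal.ofReal (h r)) ^ (-m) := by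
          refine setLIntegral_mono' measurableSet_Ioc fun t ht => ?_
          have ht0 : 0 ≤ t ^ n := pow_nonneg ht.1.le _
          rw [ENNReal.ofReal_mul ht0, ENNReal.ofReal_mul ht0, conv, mul_assoc]
          gcongr
          rw [mul_comm]
          exact step1 t ht
      _ ≤ ∫⁻ r in Ioc 0 L, (‖deriv φ r‖ₑ ^ (m + 1) * (ENNReal.ofReal (h r)) ^ (-m)) *
          ∫⁻ t in Ioc 0 r, ENNReal.ofReal (t ^ n * u t ^ m) := swap_aux hcm hGm
      _ = ∫⁻ r in Ioc 0 L, ENNReal.ofReal lam⁻¹ *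
            ENNReal.ofReal (r ^ n * |deriv φ r| ^ (m + 1)) := by
          refine setLIntegral_congr_fun measurableSet_Ioc fun r hr => ?_
          have hr' := Ioc_subset_Icc_self hr
          have hr0 : 0 ≤ r ^ n := pow_nonneg hr.1.le _
          rw [← ofReal_intervalIntegral hr.1.le (hcc.intervalIntegrable _ _)
            (fun x hx => mul_nonneg (pow_nonneg hx.1.le _)
              (Real.rpow_nonneg (hu0 x ⟨hx.1.le, hx.2.trans hr.2⟩) _))]
          have e : ∫ τ in (0:ℝ)..r, τ ^ n * u τ ^ m = lam⁻¹ * r ^ n * h r ^ m := by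
            rw [mul_assoc, hF r hr', inv_mul_cancel_left₀ hlam.ne']
          rw [e, ENNReal.ofReal_mul (by positivity), ENNReal.ofReal_mul (inv_nonneg.2 hlam.le),
            ENNReal.ofReal_mul hr0, conv, ← ENNReal.ofReal_rpow_of_nonneg (hh r hr).le hm.le]
          have e2 : (ENNReal.ofReal (h r)) ^ (-m) * (ENNReal.ofReal (h r)) ^ m = 1 := by
            rw [← ENNReal.rpow_add _ _ (hg0 r hr) ENNReal.ofReal_ne_top]; simp
          calc _ = ENNReal.ofReal lam⁻¹ * (ENNReal.ofReal (r ^ n) * ‖deriv φ r‖ₑ ^ (m + 1)) *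
                ((ENNReal.ofReal (h r)) ^ (-m) * (ENNReal.ofReal (h r)) ^ m) := by ring
            _ = _ := by rw [e2, mul_one]
      _ = _ := lintegral_const_mul' _ _ ENNReal.ofReal_ne_top
  have hnn : 0 ≤ ∫ t in (0:ℝ)..L, t ^ n * |deriv φ t| ^ (m + 1) :=
    intervalIntegral.integral_nonneg hL.le fun t ht => by have := ht.1; positivity
  rw [ENNReal.ofReal_le_ofReal_iff (mul_nonneg (inv_nonneg.2 hlam.le) hnn)] at key
  rwa [inv_mul_eq_div, le_div_iff₀ hlam, mul_comm] at key

lemma eigen_energy (hm : 0 < m) (hL : 0 < L) {lam : ℝ} {u h : ℝ → ℝ}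
    (huc : Continuous u) (hhc : Continuous h) (hu0 : ∀ t ∈ Icc 0 L, 0 ≤ u t)
    (hh0 : ∀ t ∈ Icc 0 L, 0 ≤ h t)
    (hu : ∀ t ∈ Icc 0 L, u t = ∫ r in t..L, h r)
    (hF : ∀ r ∈ Icc 0 L, r ^ n * h r ^ m = lam * ∫ τ in (0:ℝ)..r, τ ^ n * u τ ^ m) :
    ∫ t in (0:ℝ)..L, t ^ n * h t ^ (m + 1) = lam * ∫ t in (0:ℝ)..L, t ^ n * u t ^ (m + 1) := by
  have hrm : Continuous fun x : ℝ => x ^ m := Real.continuous_rpow_const hm.le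
  have hcc : Continuous fun t : ℝ => t ^ n * u t ^ m := (continuous_pow n).mul (hrm.comp huc)
  have h1 := intervalIntegral.integral_mul_deriv_eq_deriv_mul (a := 0) (b := L)
    (u := fun r => ∫ τ in (0:ℝ)..r, τ ^ n * u τ ^ m) (u' := fun r => r ^ n * u r ^ m)
    (v := fun t => ∫ r in L..t, h r) (v' := h)
    (fun x _ => hcc.integral_hasStrictDerivAt 0 x |>.hasDerivAt)
    (fun x _ => hhc.integral_hasStrictDerivAt L x |>.hasDerivAt)
    (hcc.intervalIntegrable _ _) (hhc.intervalIntegrable _ _)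
  simp only [intervalIntegral.integral_same, mul_zero, zero_mul, sub_zero, zero_sub] at h1
  have e1 : ∫ t in (0:ℝ)..L, t ^ n * h t ^ (m + 1)
      = ∫ t in (0:ℝ)..L, lam * ((∫ τ in (0:ℝ)..t, τ ^ n * u τ ^ m) * h t) := by
    refine intervalIntegral.integral_congr fun t ht => ?_
    rw [uIcc_of_le hL.le] at ht
    rw [Real.rpow_add_one' (hh0 t ht) (by linarith), ← mul_assoc, hF t ht, mul_assoc]
  have e2 : ∫ t in (0:ℝ)..L, t ^ n * u t ^ (m + 1)
      = - ∫ t in (0:ℝ)..L, t ^ n * u t ^ m * ∫ r in L..t, h r := by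
    rw [← intervalIntegral.integral_neg]
    refine intervalIntegral.integral_congr fun t ht => ?_
    rw [uIcc_of_le hL.le] at ht
    rw [Real.rpow_add_one' (hu0 t ht) (by linarith), intervalIntegral.integral_symm t L,
      ← hu t ht]
    ring
  rw [e1, intervalIntegral.integral_const_mul, h1, e2]

lemma split_aux (hL : 0 < L) (w : ℝ) {F : ℝ → ℝ}
    (hi : ∀ a b, IntervalIntegrable (fun s => F s * (w * (L - |s|) ^ n)) volume a b) :
    ∫ s in (-L)..L, F s * (w * (L - |s|) ^ n)
      = w * ((∫ t in (0:ℝ)..L, t ^ n * F (L - t)) + ∫ t in (0:ℝ)..L, t ^ n * F (t - L)) := by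
  rw [← intervalIntegral.integral_add_adjacent_intervals (hi (-L) 0) (hi 0 L), mul_add, add_comm]
  congr 1
  · rw [← intervalIntegral.integral_const_mul]
    have h := intervalIntegral.integral_comp_sub_left (a := 0) (b := L)
      (fun s => F s * (w * (L - |s|) ^ n)) L
    rw [sub_self, sub_zero] at h
    rw [← h]
    refine intervalIntegral.integral_congr fun t ht => ?_
    rw [uIcc_of_le hL.le] at ht
    rw [abs_of_nonneg (by linarith [ht.2]), sub_sub_cancel]; ring
  · rw [← intervalIntegral.integral_const_mul]
    have h := intervalIntegral.integral_comp_sub_right (a := 0) (b := L)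
      (fun s => F s * (w * (L - |s|) ^ n)) L
    rw [sub_self, zero_sub] at h
    rw [← h]
    refine intervalIntegral.integral_congr fun t ht => ?_
    rw [uIcc_of_le hL.le] at ht
    rw [abs_of_nonpos (by linarith [ht.2])]; ring

lemma convex_aux (hm : 0 < m) (a c : ℝ) :
    |a| ^ (m + 1) ≤ |a - c| ^ (m + 1) + (m + 1) * c * (|a| ^ (m + 1 - 2) * a) := by
  have hp : 0 < m + 1 := by linarith
  have hconj : (m + 1).HolderConjugate ((m + 1) / m) := by
    rw [Real.holderConjugate_iff]
    refine ⟨by linarith, ?_⟩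
    field_simp
    ring
  have h := Real.young_inequality_of_nonneg (abs_nonneg (a - c))
    (Real.rpow_nonneg (abs_nonneg a) m) hconj
  rw [← Real.rpow_mul (abs_nonneg a), mul_div_cancel₀ _ hm.ne'] at h
  rcases eq_or_ne a 0 with rfl | ha
  · simp [Real.zero_rpow hp.ne']; positivity
  have hapos : 0 < |a| := abs_pos.2 ha
  have e1 : |a| ^ (m + 1) = |a| ^ (m + 1 - 2) * a * a := by
    have : |a| ^ (m + 1) = |a| ^ (m + 1 - 2) * |a| ^ (2:ℝ) := by
      rw [← Real.rpow_add hapos]; ring_nf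
    rw [this, Real.rpow_two, sq_abs]; ring
  have e2 : |a| ^ m = |a| ^ (m + 1 - 2) * |a| := by
    rw [← Real.rpow_add_one hapos.ne']; ring_nf
  have e3 : |a| ^ (m + 1 - 2) * a * (a - c) ≤ |a - c| * |a| ^ m := by
    refine (le_abs_self _).trans_eq ?_
    rw [abs_mul, abs_mul, abs_of_pos (Real.rpow_pos_of_pos hapos _), e2]; ring
  have e4 : |a| ^ (m + 1) / ((m + 1) / m) = |a| ^ (m + 1) * m / (m + 1) := by field_simp
  rw [e4] at h
  have h5 : |a| ^ (m + 1 - 2) * a * (a - c) * (m + 1) ≤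
      |a - c| ^ (m + 1) + |a| ^ (m + 1) * m := by
    have := mul_le_mul_of_nonneg_right (e3.trans h) hp.le
    rwa [add_mul, div_mul_cancel₀ _ hp.ne', div_mul_cancel₀ _ hp.ne'] at this
  have h6 : |a| ^ (m + 1 - 2) * a * (a - c) = |a| ^ (m + 1) - c * (|a| ^ (m + 1 - 2) * a) := by
    rw [e1]; ring
  rw [h6] at h5
  nlinarith

lemma signed_cont (hm : 0 < m) : Continuous fun a : ℝ => |a| ^ (m + 1 - 2) * a := by
  rw [continuous_iff_continuousAt]
  intro a
  rcases eq_or_ne a 0 with rfl | ha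
  · have hb : ∀ a : ℝ, ‖|a| ^ (m + 1 - 2) * a‖ ≤ |a| ^ m := by
      intro a
      rcases eq_or_ne a 0 with rfl | ha
      · simp [Real.zero_rpow hm.ne']
      · have hapos : 0 < |a| := abs_pos.2 ha
        rw [norm_mul, Real.norm_of_nonneg (by positivity), Real.norm_eq_abs,
          ← Real.rpow_add_one hapos.ne']
        apply le_of_eq; ring_nf
    have hc : Continuous fun a : ℝ => |a| ^ m :=
      (Real.continuous_rpow_const hm.le).comp continuous_abs
    have h0 : Tendsto (fun a : ℝ => |a| ^ m) (𝓝 0) (𝓝 0) := by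
      have := hc.tendsto 0
      simpa [Real.zero_rpow hm.ne'] using this
    have := squeeze_zero_norm hb h0
    simpa [ContinuousAt] using this
  · have h1 : ContinuousAt (fun a : ℝ => |a| ^ (m + 1 - 2)) a :=
      continuousAt_id.abs.rpow_const (Or.inl (abs_ne_zero.2 ha))
    exact h1.mul continuousAt_id

lemma lower_aux (hm : 0 < m) (hL : 0 < L) {lam : ℝ} {w : ℝ} (hw : 0 < w)
    (hardy' : ∀ (φ : ℝ → ℝ) (K : NNReal), LipschitzWith K φ → φ L = 0 →
      lam * ∫ t in (0:ℝ)..L, t ^ n * |φ t| ^ (m + 1)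
        ≤ ∫ t in (0:ℝ)..L, t ^ n * |deriv φ t| ^ (m + 1))
    (hlam : 0 < lam) {f : ℝ → ℝ} {K : NNReal} (hf : LipschitzWith K f)
    (hcon : ∫ s in (-L)..L, |f s| ^ (m + 1 - 2) * f s * (w * (L - |s|) ^ n) = 0) :
    lam * ∫ s in (-L)..L, |f s| ^ (m + 1) * (w * (L - |s|) ^ n)
      ≤ ∫ s in (-L)..L, |deriv f s| ^ (m + 1) * (w * (L - |s|) ^ n) := by
  have hp : 0 < m + 1 := by linarith
  have hfc := hf.continuous
  have hrp : Continuous fun x : ℝ => x ^ (m + 1) := Real.continuous_rpow_const hp.le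
  have hwc : Continuous fun s : ℝ => w * (L - |s|) ^ n := by fun_prop
  have c1 : Continuous fun s => |f s| ^ (m + 1) * (w * (L - |s|) ^ n) :=
    (hrp.comp hfc.abs).mul hwc
  have c2 : Continuous fun s => |f s - f 0| ^ (m + 1) * (w * (L - |s|) ^ n) :=
    (hrp.comp (hfc.sub continuous_const).abs).mul hwc
  have c3 : Continuous fun s => |f s| ^ (m + 1 - 2) * f s * (w * (L - |s|) ^ n) :=
    ((signed_cont hm).comp hfc).mul hwc
  have i4 : ∀ a b, IntervalIntegrable (fun s => |deriv f s| ^ (m + 1) * (w * (L - |s|) ^ n))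
      volume a b := fun a b => by
    have := deriv_pow_integrable hf hp.le hwc a b
    simpa only [mul_comm] using this
  have s1 : ∫ s in (-L)..L, |f s| ^ (m + 1) * (w * (L - |s|) ^ n)
      ≤ ∫ s in (-L)..L, |f s - f 0| ^ (m + 1) * (w * (L - |s|) ^ n) := by
    have h1 : ∫ s in (-L)..L, |f s| ^ (m + 1) * (w * (L - |s|) ^ n) ≤
        ∫ s in (-L)..L, (|f s - f 0| ^ (m + 1) * (w * (L - |s|) ^ n) +
          (m + 1) * f 0 * (|f s| ^ (m + 1 - 2) * f s * (w * (L - |s|) ^ n))) := by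
      refine intervalIntegral.integral_mono_on (by linarith) (c1.intervalIntegrable _ _)
        ((c2.add (continuous_const.mul c3)).intervalIntegrable _ _) fun s hs => ?_
      have hs' : 0 ≤ L - |s| := by linarith [abs_le.2 hs]
      have := mul_le_mul_of_nonneg_right (convex_aux hm (f s) (f 0))
        (mul_nonneg hw.le (pow_nonneg hs' n))
      refine this.trans_eq ?_
      ring
    rw [intervalIntegral.integral_add (c2.intervalIntegrable _ _)
      ((c3.intervalIntegrable _ _).const_mul _), intervalIntegral.integral_const_mul,
      hcon, mul_zero, add_zero] at h1
    exact h1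
  refine (mul_le_mul_of_nonneg_left s1 hlam.le).trans ?_
  rw [split_aux hL w (F := fun s => |f s - f 0| ^ (m + 1)) (fun a b => c2.intervalIntegrable a b),
    split_aux hL w (F := fun s => |deriv f s| ^ (m + 1)) i4, mul_left_comm]
  refine mul_le_mul_of_nonneg_left ?_ hw.le
  rw [mul_add]
  have l1 : LipschitzWith K (fun t => f (L - t) - f 0) := by
    refine LipschitzWith.of_dist_le_mul fun x y => ?_
    rw [dist_sub_right]
    refine (hf.dist_le_mul _ _).trans_eq ?_
    rw [dist_sub_left]
  have l2 : LipschitzWith K (fun t => f (t - L) - f 0) := by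
    refine LipschitzWith.of_dist_le_mul fun x y => ?_
    rw [dist_sub_right]
    refine (hf.dist_le_mul _ _).trans_eq ?_
    rw [dist_sub_right]
  have h1 := hardy' _ K l1 (by simp)
  have h2 := hardy' _ K l2 (by simp)
  have d1 : ∀ t, deriv (fun t => f (L - t) - f 0) t = - deriv f (L - t) := fun t => by
    rw [deriv_sub_const, deriv_comp_const_sub]
  have d2 : ∀ t, deriv (fun t => f (t - L) - f 0) t = deriv f (t - L) := fun t => by
    rw [deriv_sub_const, deriv_comp_sub_const]
  simp only [d1, d2, abs_neg] at h1 h2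
  exact add_le_add h1 h2

lemma denom_pos (hm : 0 < m) (hL : 0 < L) {w : ℝ} (hw : 0 < w) {f : ℝ → ℝ} (hfc : Continuous f)
    (hx : ∃ x ∈ Icc (-L) L, f x ≠ 0) :
    0 < ∫ s in (-L)..L, |f s| ^ (m + 1) * (w * (L - |s|) ^ n) := by
  have hp : 0 < m + 1 := by linarith
  have hrp : Continuous fun x : ℝ => x ^ (m + 1) := Real.continuous_rpow_const hp.le
  have hwc : Continuous fun s : ℝ => w * (L - |s|) ^ n := by fun_prop
  have c1 : Continuous fun s => |f s| ^ (m + 1) * (w * (L - |s|) ^ n) :=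
    (hrp.comp hfc.abs).mul hwc
  obtain ⟨x, hx, hfx⟩ := hx
  rw [← closure_Ioo (by linarith : -L ≠ L)] at hx
  obtain ⟨y, hy1, hy2⟩ := mem_closure_iff.1 hx {y | f y ≠ 0}
    (isOpen_ne_fun hfc continuous_const) hfx
  refine intervalIntegral.integral_pos (by linarith) c1.continuousOn (fun s hs => ?_)
    ⟨y, Ioo_subset_Icc_self hy2, ?_⟩
  · have hs' : 0 ≤ L - |s| := by linarith [abs_le.2 (Ioc_subset_Icc_self hs)]
    positivity
  · have h1 : 0 < L - |y| := by linarith [abs_lt.2 hy2]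
    have h2 : 0 < |f y| := abs_pos.2 hy1
    positivity

lemma minimizer (hm : 0 < m) (hL : 0 < L) {lam : ℝ} {u h : ℝ → ℝ} (w : ℝ)
    (huc : Continuous u) (hhc : Continuous h) (hu0 : ∀ t ∈ Icc 0 L, 0 ≤ u t) (huz : 0 < u 0)
    (hh0 : ∀ t ∈ Icc 0 L, 0 ≤ h t)
    (hu : ∀ t ∈ Icc 0 L, u t = ∫ r in t..L, h r)
    (hF : ∀ r ∈ Icc 0 L, r ^ n * h r ^ m = lam * ∫ τ in (0:ℝ)..r, τ ^ n * u τ ^ m) :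
    ∃ f : ℝ → ℝ, (∃ K : NNReal, LipschitzWith K f) ∧ (∃ x ∈ Icc (-L) L, f x ≠ 0) ∧
      (∫ s in (-L)..L, |f s| ^ (m + 1 - 2) * f s * (w * (L - |s|) ^ n) = 0) ∧
      (∫ s in (-L)..L, |deriv f s| ^ (m + 1) * (w * (L - |s|) ^ n))
        = lam * ∫ s in (-L)..L, |f s| ^ (m + 1) * (w * (L - |s|) ^ n) := by
  have hp : 0 < m + 1 := by linarith
  have hrp : Continuous fun x : ℝ => x ^ (m + 1) := Real.continuous_rpow_const hp.le
  have hwc : Continuous fun s : ℝ => w * (L - |s|) ^ n := by fun_prop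
  set k : ℝ → ℝ := fun x => h (max 0 (L - |x|)) with hk
  have hkc : Continuous k := by fun_prop
  have hmem : ∀ x : ℝ, max 0 (L - |x|) ∈ Icc 0 L := fun x =>
    ⟨le_max_left _ _, max_le hL.le (by linarith [abs_nonneg x])⟩
  set f : ℝ → ℝ := fun s => ∫ x in (0:ℝ)..s, k x with hf
  have hder : ∀ s, HasDerivAt f (k s) s := fun s =>
    (hkc.integral_hasStrictDerivAt 0 s).hasDerivAt
  have hd : ∀ s, deriv f s = k s := fun s => (hder s).deriv
  obtain ⟨C, hC⟩ := (isCompact_Icc (a := (0:ℝ)) (b := L)).exists_bound_of_continuousOn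
    hhc.continuousOn
  have hlip : LipschitzWith (Real.toNNReal C) f := by
    refine lipschitzWith_of_nnnorm_deriv_le (fun s => (hder s).differentiableAt) fun s => ?_
    rw [hd s, ← NNReal.coe_le_coe, coe_nnnorm]
    exact (hC _ (hmem s)).trans (Real.le_coe_toNNReal C)
  have hodd : ∀ s, f (-s) = - f s := by
    intro s
    have := intervalIntegral.integral_comp_neg (a := 0) (b := s) k
    have hev : ∀ x, k (-x) = k x := fun x => by simp [hk]
    simp only [hev, neg_zero] at this
    simp only [hf]
    rw [this, intervalIntegral.integral_symm]
  have hfu : ∀ t ∈ Icc 0 L, f (L - t) = u t := by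
    intro t ht
    rw [hu t ht]
    have h1 := intervalIntegral.integral_comp_sub_left (a := 0) (b := L - t) h L
    rw [sub_zero, sub_sub_cancel] at h1
    rw [← h1]
    refine intervalIntegral.integral_congr fun x hx => ?_
    rw [uIcc_of_le (by linarith [ht.2])] at hx
    simp only [hk]
    rw [abs_of_nonneg hx.1, max_eq_right (by linarith [hx.2, ht.1])]
  have hkh : ∀ t ∈ Icc 0 L, k (L - t) = h t := by
    intro t ht
    simp only [hk]
    rw [abs_of_nonneg (by linarith [ht.2]), sub_sub_cancel, max_eq_right ht.1]
  have hfu' : ∀ t ∈ Icc 0 L, f (t - L) = - u t := fun t ht => by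
    rw [← hfu t ht, ← hodd, neg_sub]
  have hkh' : ∀ t ∈ Icc 0 L, k (t - L) = h t := fun t ht => by
    rw [← hkh t ht]; simp only [hk, abs_sub_comm]
  have hfc := hlip.continuous
  refine ⟨f, ⟨_, hlip⟩, ⟨L, ⟨by linarith, le_rfl⟩, ?_⟩, ?_, ?_⟩
  · have := hfu 0 ⟨le_rfl, hL.le⟩
    rw [sub_zero] at this
    rw [this]; exact huz.ne'
  · have := intervalIntegral.integral_comp_neg (a := -L) (b := L)
      (fun s => |f s| ^ (m + 1 - 2) * f s * (w * (L - |s|) ^ n))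
    simp only [hodd, abs_neg, neg_neg, mul_neg, neg_mul, intervalIntegral.integral_neg] at this
    linarith
  · have c1 : Continuous fun s => |f s| ^ (m + 1) * (w * (L - |s|) ^ n) :=
      (hrp.comp hfc.abs).mul hwc
    have c2 : Continuous fun s => |k s| ^ (m + 1) * (w * (L - |s|) ^ n) :=
      (hrp.comp hkc.abs).mul hwc
    simp only [hd]
    rw [split_aux hL w (F := fun s => |f s| ^ (m + 1)) (fun a b => c1.intervalIntegrable a b),
      split_aux hL w (F := fun s => |k s| ^ (m + 1)) (fun a b => c2.intervalIntegrable a b)]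
    have en := eigen_energy hm hL huc hhc hu0 hh0 hu hF
    have q1 : ∫ t in (0:ℝ)..L, t ^ n * |k (L - t)| ^ (m + 1)
        = ∫ t in (0:ℝ)..L, t ^ n * h t ^ (m + 1) := by
      refine intervalIntegral.integral_congr fun t ht => ?_
      rw [uIcc_of_le hL.le] at ht
      simp only [hkh t ht, abs_of_nonneg (hh0 t ht)]
    have q2 : ∫ t in (0:ℝ)..L, t ^ n * |k (t - L)| ^ (m + 1)
        = ∫ t in (0:ℝ)..L, t ^ n * h t ^ (m + 1) := by
      refine intervalIntegral.integral_congr fun t ht => ?_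
      rw [uIcc_of_le hL.le] at ht
      simp only [hkh' t ht, abs_of_nonneg (hh0 t ht)]
    have q3 : ∫ t in (0:ℝ)..L, t ^ n * |f (L - t)| ^ (m + 1)
        = ∫ t in (0:ℝ)..L, t ^ n * u t ^ (m + 1) := by
      refine intervalIntegral.integral_congr fun t ht => ?_
      rw [uIcc_of_le hL.le] at ht
      simp only [hfu t ht, abs_of_nonneg (hu0 t ht)]
    have q4 : ∫ t in (0:ℝ)..L, t ^ n * |f (t - L)| ^ (m + 1)
        = ∫ t in (0:ℝ)..L, t ^ n * u t ^ (m + 1) := by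
      refine intervalIntegral.integral_congr fun t ht => ?_
      rw [uIcc_of_le hL.le] at ht
      simp only [hfu' t ht, abs_neg, abs_of_nonneg (hu0 t ht)]
    rw [q1, q2, q3, q4, en]; ring

end helpers

/-- Lemma A.1, existence. The value `η` of the one-dimensional
weighted problem is strictly positive and the infimum is attained by some admissible
Lipschitz function `f`. -/
theorem eta1D_pos_and_attained {N : ℕ} (hN : 2 ≤ N) (p : ℝ) (hp : 1 < p)
    (d : ℝ) (hd : 0 < d) :
    0 < eta1D N p d ∧
    ∃ f : ℝ → ℝ, Admissible1D N p d f ∧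
      (∫ s in (-(d / 2))..(d / 2), |deriv f s| ^ p * coneWeight N d s) =
        eta1D N p d * ∫ s in (-(d / 2))..(d / 2), |f s| ^ p * coneWeight N d s := by
  obtain ⟨m, rfl⟩ : ∃ m, p = m + 1 := ⟨p - 1, by ring⟩
  have hm : 0 < m := by linarith
  have hL : 0 < d / 2 := by linarith
  obtain ⟨lam, u, h, hlam, huc, hhc, hu0, huz, hh0, hh, hu, hF⟩ :=
    eigen_data (n := N - 1) hm hL
  have hw : 0 < (volume (Metric.ball (0 : EuclideanSpace ℝ (Fin (N - 1))) 1)).toReal :=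
    ENNReal.toReal_pos (Metric.measure_ball_pos volume _ one_pos).ne' measure_ball_lt_top.ne
  obtain ⟨f, hf1, hf2, hf3, hf4⟩ := minimizer hm hL
    (volume (Metric.ball (0 : EuclideanSpace ℝ (Fin (N - 1))) 1)).toReal
    huc hhc hu0 huz hh0 hu hF
  have hfadm : Admissible1D N (m + 1) d f := ⟨hf1, hf2, hf3⟩
  have hden : ∀ g : ℝ → ℝ, Admissible1D N (m + 1) d g →
      0 < ∫ s in (-(d / 2))..(d / 2), |g s| ^ (m + 1) * coneWeight N d s := by
    rintro g ⟨⟨K, hK⟩, hx, -⟩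
    exact denom_pos hm hL hw hK.continuous hx
  have hleast : IsLeast { R : ℝ | ∃ f : ℝ → ℝ, Admissible1D N (m + 1) d f ∧
      R = (∫ s in (-(d / 2))..(d / 2), |deriv f s| ^ (m + 1) * coneWeight N d s) /
        (∫ s in (-(d / 2))..(d / 2), |f s| ^ (m + 1) * coneWeight N d s) } lam := by
    constructor
    · refine ⟨f, hfadm, ?_⟩
      rw [eq_div_iff (hden f hfadm).ne']
      exact hf4.symm
    · rintro R ⟨g, hg, rfl⟩
      rw [le_div_iff₀ (hden g hg)]
      obtain ⟨⟨K, hK⟩, -, hc⟩ := hg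
      exact lower_aux hm hL hw
        (fun φ K' h1 h2 => hardy hm hL hlam huc hhc hu0 hh hu hF h1 h2) hlam hK hc
  have heta : eta1D N (m + 1) d = lam := hleast.csInf_eq
  rw [heta]
  exact ⟨hlam, f, hfadm, hf4⟩
end

section
/- With the one-dimensional weighted problem defined in the context, every Lipschitz minimizer f attaining η satisfies: (i) the weak Euler–Lagrange equation with no Lagrange multiplier, namely ∫_{−d/2}^{d/2} |f'|^{p−2} f' φ' g ds = η ∫_{−d/2}^{d/2} |f|^{p−2} f φ g ds for every Lipschitz function φ on [−d/2, d/2] (so f is a weak solution of −(g|f'|^{p−2}f')' = η g |f|^{p−2} f with Neumann conditions f'(±d/2) = 0); and (ii) f vanishes exactly at the origin: for x ∈ [−d/2, d/2], f(x) = 0 if and only if x = 0. -/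
open MeasureTheory Set Real

namespace EtaAux

noncomputable def psi (p y : ℝ) : ℝ := |y| ^ (p - 2) * y

lemma psi_cont {p : ℝ} (hp : 1 < p) : Continuous (psi p) := by
  have h1 : ContDiff ℝ 1 (fun x : ℝ => ‖x‖ ^ p) := contDiff_norm_rpow hp
  have h2 : Continuous (deriv (fun x : ℝ => ‖x‖ ^ p)) := h1.continuous_deriv le_rfl
  have h3 : psi p = fun x => p⁻¹ * deriv (fun x : ℝ => ‖x‖ ^ p) x := by
    funext x
    have := (hasDerivAt_abs_rpow x hp).deriv
    simp only [Real.norm_eq_abs, this, psi]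
    field_simp
  rw [h3]
  exact continuous_const.mul h2

lemma psi_neg (p y : ℝ) : psi p (-y) = - psi p y := by simp [psi]

lemma psi_zero (p : ℝ) : psi p 0 = 0 := by simp [psi]

lemma psi_pos {p y : ℝ} (hy : 0 < y) : 0 < psi p y :=
  mul_pos (rpow_pos_of_pos (abs_pos.2 hy.ne') _) hy

lemma psi_nonneg {p y : ℝ} (hy : 0 ≤ y) : 0 ≤ psi p y :=
  mul_nonneg (rpow_nonneg (abs_nonneg _) _) hy

lemma psi_nonpos {p y : ℝ} (hy : y ≤ 0) : psi p y ≤ 0 :=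
  mul_nonpos_of_nonneg_of_nonpos (rpow_nonneg (abs_nonneg _) _) hy

lemma psi_neg_of_neg {p y : ℝ} (hy : y < 0) : psi p y < 0 := by
  have := psi_pos (p := p) (neg_pos.2 hy)
  rw [psi_neg] at this; linarith

lemma nonneg_of_psi_nonneg {p y : ℝ} (h : 0 ≤ psi p y) : 0 ≤ y := by
  by_contra hy
  exact absurd (psi_neg_of_neg (p := p) (not_le.1 hy)) (not_lt.2 h)

lemma eq_zero_of_psi {p y : ℝ} (h : psi p y = 0) : y = 0 := by
  rcases lt_trichotomy y 0 with hy | hy | hy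
  · exact absurd h (psi_neg_of_neg hy).ne
  · exact hy
  · exact absurd h (psi_pos hy).ne'

lemma abs_psi {p : ℝ} (hp : 1 < p) (y : ℝ) : |psi p y| = |y| ^ (p - 1) := by
  by_cases hy : y = 0
  · subst hy; simp [psi, Real.zero_rpow (by linarith : p - 1 ≠ 0)]
  · have := abs_pos.2 hy
    rw [psi, abs_mul, abs_of_nonneg (rpow_nonneg (abs_nonneg y) _)]
    conv_lhs => rw [← Real.rpow_one |y|, ← Real.rpow_mul this.le, ← Real.rpow_add this]
    congr 1; ring

lemma psi_mul_self {p : ℝ} (hp : 1 < p) (y : ℝ) : psi p y * y = |y| ^ p := by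
  by_cases hy : y = 0
  · subst hy; simp [psi, Real.zero_rpow (by linarith : p ≠ 0)]
  · have := abs_pos.2 hy
    have h : p = (p - 2) + 1 + 1 := by ring
    rw [psi, mul_assoc, ← abs_mul_abs_self y]
    conv_rhs => rw [h, Real.rpow_add this, Real.rpow_add this, Real.rpow_one]
    ring

lemma abs_rpow_convex {p : ℝ} (hp : 1 < p) : ConvexOn ℝ univ (fun x : ℝ => |x| ^ p) := by
  have h1 := convexOn_rpow hp.le
  refine ⟨convex_univ, fun x _ y _ a b ha hb hab => ?_⟩
  have h2 := h1.2 (x := |x|) (abs_nonneg x) (y := |y|) (abs_nonneg y) ha hb hab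
  refine le_trans ?_ h2
  apply Real.rpow_le_rpow (abs_nonneg _) _ (by linarith)
  simp only [smul_eq_mul]
  calc |a * x + b * y| ≤ |a * x| + |b * y| := abs_add_le _ _
    _ = _ := by rw [abs_mul, abs_mul, abs_of_nonneg ha, abs_of_nonneg hb]

lemma abs_rpow_ge {p : ℝ} (hp : 1 < p) (a b : ℝ) :
    |a| ^ p + p * (psi p a * (b - a)) ≤ |b| ^ p := by
  have hc := abs_rpow_convex hp
  have hd := hasDerivAt_abs_rpow a hp
  rcases lt_trichotomy a b with h | h | h
  · have := hc.le_slope_of_hasDerivAt (mem_univ a) (mem_univ b) h hd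
    rw [slope_def_field, le_div_iff₀ (by linarith)] at this
    simp only [psi]; linarith
  · subst h; simp
  · have := hc.slope_le_of_hasDerivAt (mem_univ b) (mem_univ a) h hd
    rw [slope_def_field, div_le_iff₀ (by linarith)] at this
    simp only [psi]; linarith

/-- measurable and bounded implies interval integrable -/
lemma ii_of_bdd {F : ℝ → ℝ} (hF : Measurable F) {C : ℝ} {a b : ℝ}
    (h : ∀ x ∈ uIoc a b, |F x| ≤ C) : IntervalIntegrable F volume a b := by
  rw [intervalIntegrable_iff]
  refine Measure.integrableOn_of_bounded (M := C) (by simp) hF.aestronglyMeasurable ?_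
  filter_upwards [ae_restrict_mem measurableSet_uIoc] with x hx
  exact h x hx

lemma deriv_bdd {f : ℝ → ℝ} {K : NNReal} (h : LipschitzWith K f) (x : ℝ) : |deriv f x| ≤ K :=
  norm_deriv_le_of_lipschitz h

/-- Continuous function of bounded derivatives times something locally nice -/
lemma ii_gen {F : ℝ → ℝ → ℝ} (hF : Continuous F.uncurry) {f φ g : ℝ → ℝ} {K K' : NNReal}
    (hf : LipschitzWith K f) (hφ : LipschitzWith K' φ) (hg : Continuous g) (a b : ℝ) :
    IntervalIntegrable (fun x => F (deriv f x) (deriv φ x) * g x) volume a b := by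
  have hc : IsCompact (Icc (-(K:ℝ)) K ×ˢ Icc (-(K':ℝ)) K') := isCompact_Icc.prod isCompact_Icc
  obtain ⟨C, hC⟩ := hc.exists_bound_of_continuousOn hF.continuousOn
  have : IntervalIntegrable (fun x => F (deriv f x) (deriv φ x)) volume a b := by
    refine ii_of_bdd (C := C) ?_ ?_
    · exact hF.measurable.comp ((measurable_deriv f).prodMk (measurable_deriv φ))
    · intro x _
      exact hC (deriv f x, deriv φ x) ⟨abs_le.1 (deriv_bdd hf x), abs_le.1 (deriv_bdd hφ x)⟩
  exact this.mul_continuousOn hg.continuousOn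

lemma pow_cont {p : ℝ} (hp : 1 < p) : Continuous (fun x : ℝ => |x| ^ p) :=
  continuous_abs.rpow_const (fun _ => Or.inr (by linarith))

/-- constants making the constraint hold -/
lemma exists_const {p : ℝ} (hp : 1 < p) {L : ℝ} (hL : 0 < L) {g : ℝ → ℝ} (hg : Continuous g)
    (hg0 : ∀ x ∈ Icc (-L) L, 0 ≤ g x) {h : ℝ → ℝ} (hh : Continuous h) :
    ∃ c : ℝ, ∫ s in (-L)..L, psi p (h s + c) * g s = 0 := by
  obtain ⟨B, hB⟩ := (isCompact_Icc (a := -L) (b := L)).exists_bound_of_continuousOn hh.continuousOn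
  have hB0 : 0 ≤ B := (norm_nonneg _).trans (hB 0 ⟨by linarith, by linarith⟩)
  have hcont : Continuous (fun c : ℝ => ∫ s in (-L)..L, psi p (h s + c) * g s) := by
    apply intervalIntegral.continuous_parametric_intervalIntegral_of_continuous'
    have := psi_cont hp
    simp only [Function.uncurry_def]
    fun_prop
  have h1 : (∫ s in (-L)..L, psi p (h s + -B) * g s) ≤ 0 := by
    have : 0 ≤ ∫ s in (-L)..L, -(psi p (h s + -B) * g s) := by
      apply intervalIntegral.integral_nonneg (by linarith)
      intro u hu
      have h3 := hB u hu
      rw [Real.norm_eq_abs, abs_le] at h3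
      have := mul_nonpos_of_nonpos_of_nonneg (psi_nonpos (p := p) (by linarith : h u + -B ≤ 0)) (hg0 u hu)
      linarith
    rw [intervalIntegral.integral_neg] at this; linarith
  have h2 : 0 ≤ (∫ s in (-L)..L, psi p (h s + B) * g s) := by
    apply intervalIntegral.integral_nonneg (by linarith)
    intro u hu
    have h3 := hB u hu
    rw [Real.norm_eq_abs, abs_le] at h3
    exact mul_nonneg (psi_nonneg (p := p) (by linarith : 0 ≤ h u + B)) (hg0 u hu)
  obtain ⟨c, _, hc⟩ := intermediate_value_Icc (by linarith : -B ≤ B) hcont.continuousOn ⟨h1, h2⟩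
  exact ⟨c, hc⟩

structure IsMin (g : ℝ → ℝ) (L p η : ℝ) (f : ℝ → ℝ) : Prop where
  lip : ∃ K : NNReal, LipschitzWith K f
  nz : ∃ x ∈ Icc (-L) L, f x ≠ 0
  con : (∫ s in (-L)..L, psi p (f s) * g s) = 0
  eqn : (∫ s in (-L)..L, |deriv f s| ^ p * g s) = η * ∫ s in (-L)..L, |f s| ^ p * g s

def Inf (g : ℝ → ℝ) (L p η : ℝ) : Prop :=
  ∀ h : ℝ → ℝ, (∃ K : NNReal, LipschitzWith K h) → (∫ s in (-L)..L, psi p (h s) * g s) = 0 →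
    η * (∫ s in (-L)..L, |h s| ^ p * g s) ≤ ∫ s in (-L)..L, |deriv h s| ^ p * g s

lemma el_step {p : ℝ} (hp : 1 < p) {L : ℝ} (hL : 0 < L) {g : ℝ → ℝ} (hg : Continuous g)
    (hg0 : ∀ x ∈ Icc (-L) L, 0 ≤ g x) {η : ℝ} (hη : 0 ≤ η) (hinf : Inf g L p η) {f : ℝ → ℝ}
    (hf : IsMin g L p η f) {φ : ℝ → ℝ} (hφ : ∃ K : NNReal, LipschitzWith K φ) {t : ℝ} (ht : 0 < t) :
    η * (∫ s in (-L)..L, psi p (f s) * φ s * g s) ≤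
      ∫ s in (-L)..L, psi p (deriv f s + t * deriv φ s) * deriv φ s * g s := by
  obtain ⟨K, hK⟩ := hf.lip
  obtain ⟨K', hK'⟩ := hφ
  have hpc := psi_cont hp
  have hp0 : 0 ≤ p := by linarith
  have hfc := hK.continuous
  have hφc := hK'.continuous
  have hLL : -L ≤ L := by linarith
  obtain ⟨c, hc⟩ := exists_const hp hL hg hg0 (h := fun s => f s + t * φ s) (by fun_prop)
  have hlip : ∃ K : NNReal, LipschitzWith K (fun s => f s + t * φ s + c) := by
    refine ⟨_, (hK.add ((lipschitzWith_smul t).comp hK')).add (LipschitzWith.const c)⟩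
  have h1 := hinf _ hlip hc
  have h2 : (∫ s in (-L)..L, |deriv (fun s => f s + t * φ s + c) s| ^ p * g s) =
      ∫ s in (-L)..L, |deriv f s + t * deriv φ s| ^ p * g s := by
    apply intervalIntegral.integral_congr_ae
    filter_upwards [hK.ae_differentiableAt_real, hK'.ae_differentiableAt_real] with x hx hx' _
    have : deriv (fun s => f s + t * φ s + c) x = deriv f x + t * deriv φ x :=
      ((hx.hasDerivAt.add (hx'.hasDerivAt.const_mul t)).add_const c).deriv
    rw [this]
  rw [h2] at h1
  have h3 : (∫ s in (-L)..L, |deriv f s + t * deriv φ s| ^ p * g s) -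
      p * t * (∫ s in (-L)..L, psi p (deriv f s + t * deriv φ s) * deriv φ s * g s) ≤
      ∫ s in (-L)..L, |deriv f s| ^ p * g s := by
    have i1 := ii_gen (F := fun u v => |u + t * v| ^ p) (by
      simp only [Function.uncurry_def]; fun_prop) hK hK' hg (-L) L
    have i2 := ii_gen (F := fun u v => psi p (u + t * v) * v) (by
      simp only [Function.uncurry_def]; fun_prop) hK hK' hg (-L) L
    have i3 := ii_gen (F := fun u v => |u| ^ p) (by
      simp only [Function.uncurry_def]; fun_prop) hK hK' hg (-L) L
    rw [← intervalIntegral.integral_const_mul, ← intervalIntegral.integral_sub i1 (i2.const_mul _)]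
    apply intervalIntegral.integral_mono_on hLL (i1.sub (i2.const_mul _)) i3
    intro x hx
    have := mul_le_mul_of_nonneg_right
      (abs_rpow_ge hp (deriv f x + t * deriv φ x) (deriv f x)) (hg0 x hx)
    linarith
  have h4 : (∫ s in (-L)..L, |f s| ^ p * g s) +
      p * t * (∫ s in (-L)..L, psi p (f s) * φ s * g s) ≤
      ∫ s in (-L)..L, |f s + t * φ s + c| ^ p * g s := by
    have i1 : IntervalIntegrable (fun s => |f s| ^ p * g s) volume (-L) L :=
      Continuous.intervalIntegrable (by fun_prop) _ _
    have i2 : IntervalIntegrable (fun s => psi p (f s) * φ s * g s) volume (-L) L :=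
      Continuous.intervalIntegrable (by fun_prop) _ _
    have i3 : IntervalIntegrable (fun s => psi p (f s) * g s) volume (-L) L :=
      Continuous.intervalIntegrable (by fun_prop) _ _
    have i4 : IntervalIntegrable (fun s => |f s + t * φ s + c| ^ p * g s) volume (-L) L :=
      Continuous.intervalIntegrable (by fun_prop) _ _
    have e : (∫ s in (-L)..L, |f s| ^ p * g s) +
      p * t * (∫ s in (-L)..L, psi p (f s) * φ s * g s) =
      ∫ s in (-L)..L, |f s| ^ p * g s + p * t * (psi p (f s) * φ s * g s)
        + p * c * (psi p (f s) * g s) := by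
      rw [intervalIntegral.integral_add (i1.add (i2.const_mul _)) (i3.const_mul _),
        intervalIntegral.integral_add i1 (i2.const_mul _), intervalIntegral.integral_const_mul,
        intervalIntegral.integral_const_mul, hf.con, mul_zero, add_zero]
    rw [e]
    apply intervalIntegral.integral_mono_on hLL ((i1.add (i2.const_mul _)).add (i3.const_mul _)) i4
    intro x hx
    have := mul_le_mul_of_nonneg_right
      (abs_rpow_ge hp (f x) (f x + t * φ x + c)) (hg0 x hx)
    linarith
  have h5 := mul_le_mul_of_nonneg_left h4 hη
  have h6 := hf.eqn
  have hpt : 0 < p * t := mul_pos (by linarith) ht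
  refine le_of_mul_le_mul_left ?_ hpt
  linarith

lemma el_le {p : ℝ} (hp : 1 < p) {L : ℝ} (hL : 0 < L) {g : ℝ → ℝ} (hg : Continuous g)
    (hg0 : ∀ x ∈ Icc (-L) L, 0 ≤ g x) {η : ℝ} (hη : 0 ≤ η) (hinf : Inf g L p η) {f : ℝ → ℝ}
    (hf : IsMin g L p η f) {φ : ℝ → ℝ} (hφ : ∃ K : NNReal, LipschitzWith K φ) :
    η * (∫ s in (-L)..L, psi p (f s) * φ s * g s) ≤
      ∫ s in (-L)..L, psi p (deriv f s) * deriv φ s * g s := by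
  have hstep := fun t ht => el_step hp hL hg hg0 hη hinf hf hφ (t := t) ht
  obtain ⟨K, hK⟩ := hf.lip
  obtain ⟨K', hK'⟩ := hφ
  have hpc := psi_cont hp
  obtain ⟨G, hG⟩ := (isCompact_Icc (a := -L) (b := L)).exists_bound_of_continuousOn hg.continuousOn
  have key : Filter.Tendsto (fun t : ℝ => ∫ s in (-L)..L,
      psi p (deriv f s + t * deriv φ s) * deriv φ s * g s) (nhdsWithin 0 (Ioi 0))
      (nhds (∫ s in (-L)..L, psi p (deriv f s) * deriv φ s * g s)) := by
    apply intervalIntegral.tendsto_integral_filter_of_dominated_convergence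
      (fun _ => ((K:ℝ) + K') ^ (p - 1) * K' * G)
    · refine Filter.Eventually.of_forall fun t => Measurable.aestronglyMeasurable ?_
      have h1 := measurable_deriv f
      have h2 := measurable_deriv φ
      have h3 := hg.measurable
      have h4 := hpc.measurable
      fun_prop
    · filter_upwards [Ioc_mem_nhdsGT (zero_lt_one' ℝ)] with t ht
      refine Filter.Eventually.of_forall fun x hx => ?_
      rw [uIoc_of_le (by linarith)] at hx
      have hg1 := hG x ⟨hx.1.le, hx.2⟩
      have a1 := deriv_bdd hK x
      have a2 := deriv_bdd hK' x
      rw [Real.norm_eq_abs] at hg1 ⊢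
      rw [abs_mul, abs_mul, abs_psi hp]
      have a3 : |deriv f x + t * deriv φ x| ≤ K + K' := by
        refine (abs_add_le _ _).trans (add_le_add a1 ?_)
        rw [abs_mul, abs_of_pos ht.1]
        calc t * |deriv φ x| ≤ 1 * |deriv φ x| := by gcongr; exact ht.2
          _ ≤ K' := by rw [one_mul]; exact a2
      gcongr
    · simp
    · refine Filter.Eventually.of_forall fun x hx => ?_
      have : Continuous (fun t : ℝ => psi p (deriv f x + t * deriv φ x) * deriv φ x * g x) := by
        fun_prop
      have := (this.tendsto 0).mono_left (nhdsWithin_le_nhds (s := Ioi 0))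
      simpa using this
  apply ge_of_tendsto key
  filter_upwards [self_mem_nhdsWithin] with t ht
  exact hstep t ht

lemma el {p : ℝ} (hp : 1 < p) {L : ℝ} (hL : 0 < L) {g : ℝ → ℝ} (hg : Continuous g)
    (hg0 : ∀ x ∈ Icc (-L) L, 0 ≤ g x) {η : ℝ} (hη : 0 ≤ η) (hinf : Inf g L p η) {f : ℝ → ℝ}
    (hf : IsMin g L p η f) {φ : ℝ → ℝ} (hφ : ∃ K : NNReal, LipschitzWith K φ) :
    (∫ s in (-L)..L, psi p (deriv f s) * deriv φ s * g s) =
      η * (∫ s in (-L)..L, psi p (f s) * φ s * g s) := by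
  refine le_antisymm ?_ (el_le hp hL hg hg0 hη hinf hf hφ)
  obtain ⟨K', hK'⟩ := hφ
  have := el_le hp hL hg hg0 hη hinf hf (φ := fun s => - φ s) ⟨K', hK'.neg⟩
  have e1 : deriv (fun s => - φ s) = fun s => - deriv φ s := by funext s; exact deriv.fun_neg
  simp only [e1, mul_neg, neg_mul, intervalIntegral.integral_neg] at this
  linarith

/-- integrated ODE -/
lemma ode {p : ℝ} (hp : 1 < p) {L : ℝ} (hL : 0 < L) {g : ℝ → ℝ} (hg : Continuous g)
    (hg0 : ∀ x ∈ Icc (-L) L, 0 ≤ g x) {η : ℝ} (hη : 0 ≤ η) (hinf : Inf g L p η) {f : ℝ → ℝ}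
    (hf : IsMin g L p η f) :
    ∀ᵐ x, x ∈ Ioc (-L) L → psi p (deriv f x) * g x =
      - η * ∫ s in (-L)..x, psi p (f s) * g s := by
  obtain ⟨K, hK⟩ := hf.lip
  have hpc := psi_cont hp
  have hfc := hK.continuous
  have hLL : -L ≤ L := by linarith
  set W : ℝ → ℝ := fun x => ∫ s in (-L)..x, psi p (f s) * g s with hW
  have hint : Continuous (fun s => psi p (f s) * g s) := by fun_prop
  have hWd : ∀ x, HasDerivAt W (psi p (f x) * g x) x := fun x =>
    intervalIntegral.integral_hasDerivAt_right (hint.intervalIntegrable _ _)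
      (hint.stronglyMeasurableAtFilter _ _) hint.continuousAt
  have hWc : Continuous W := continuous_iff_continuousAt.2 fun x => (hWd x).continuousAt
  have hWL : W L = 0 := hf.con
  have hWL' : W (-L) = 0 := by simp [hW]
  set q : ℝ → ℝ := fun x => psi p (deriv f x) * g x + η * W x with hq
  have hqm : Measurable q := by
    have h1 := measurable_deriv f
    have h4 := hpc.measurable
    have h3 := hg.measurable
    have h5 := hWc.measurable
    fun_prop
  obtain ⟨G, hG⟩ := (isCompact_Icc (a := -L) (b := L)).exists_bound_of_continuousOn hg.continuousOn
  obtain ⟨B, hB⟩ := (isCompact_Icc (a := -L) (b := L)).exists_bound_of_continuousOn hWc.continuousOn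
  have hqb : ∀ x ∈ Icc (-L) L, |q x| ≤ (K:ℝ) ^ (p - 1) * G + η * B := by
    intro x hx
    have hg1 := hG x hx
    have hb1 := hB x hx
    rw [Real.norm_eq_abs] at hg1 hb1
    refine (abs_add_le _ _).trans ?_
    rw [abs_mul, abs_mul, abs_psi hp, abs_of_nonneg hη]
    have := deriv_bdd hK x
    gcongr
  set M := (K:ℝ) ^ (p - 1) * G + η * B with hM
  have hM0 : 0 ≤ M := (abs_nonneg _).trans (hqb 0 ⟨by linarith, by linarith⟩)
  set χ : ℝ → ℝ := (Icc (-L) L).indicator q with hχ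
  have hχm : Measurable χ := hqm.indicator measurableSet_Icc
  have hχb : ∀ x, |χ x| ≤ M := by
    intro x
    by_cases hx : x ∈ Icc (-L) L
    · rw [hχ, indicator_of_mem hx]; exact hqb x hx
    · rw [hχ, indicator_of_notMem hx]; simpa using hM0
  have hχi : ∀ a b, IntervalIntegrable χ volume a b := fun a b => ii_of_bdd hχm fun x _ => hχb x
  set φ : ℝ → ℝ := fun x => ∫ s in (0:ℝ)..x, χ s with hφ
  have hφl : LipschitzWith M.toNNReal φ := by
    apply LipschitzWith.of_dist_le_mul
    intro x y
    rw [Real.dist_eq, Real.dist_eq, Real.coe_toNNReal _ hM0, hφ]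
    simp only
    rw [intervalIntegral.integral_interval_sub_left (hχi _ _) (hχi _ _)]
    exact intervalIntegral.norm_integral_le_of_norm_le_const (f := χ) (fun s _ => hχb s)
  have hφd : ∀ᵐ x, x ∈ Ioc (-L) L → deriv φ x = χ x := by
    filter_upwards [(hχi (-L) L).ae_hasDerivAt_integral] with x hx hx2
    rw [uIcc_of_le hLL] at hx
    exact (hx ⟨hx2.1.le, hx2.2⟩ 0 ⟨by linarith, by linarith⟩).deriv
  have h1 := el hp hL hg hg0 hη hinf hf ⟨_, hφl⟩
  have acW : AbsolutelyContinuousOnInterval W (-L) L := by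
    have : ContDiff ℝ 1 W := by
      rw [contDiff_one_iff_deriv]
      refine ⟨fun x => (hWd x).differentiableAt, ?_⟩
      rw [show deriv W = _ from funext fun x => (hWd x).deriv]
      exact hint
    exact this.contDiffOn.absolutelyContinuousOnInterval
  have acφ : AbsolutelyContinuousOnInterval φ (-L) L :=
    hφl.lipschitzOnWith.absolutelyContinuousOnInterval
  have h2 := acW.integral_mul_deriv_eq_deriv_mul acφ
  rw [hWL, hWL', zero_mul, zero_mul, sub_zero, zero_sub] at h2
  have h3 : (∫ s in (-L)..L, psi p (f s) * φ s * g s) = ∫ s in (-L)..L, deriv W s * φ s := by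
    congr 1; funext s; rw [(hWd s).deriv]; ring
  have h4 : (∫ s in (-L)..L, q s * q s) = 0 := by
    have i1 := ii_gen (F := fun u v => psi p u * v) (by
      simp only [Function.uncurry_def]; fun_prop) hK hφl hg (-L) L
    have i2 := ii_gen (F := fun u v => v) (by
      simp only [Function.uncurry_def]; fun_prop) hK hφl hWc (-L) L
    have : (∫ s in (-L)..L, q s * q s) = ∫ s in (-L)..L, (psi p (deriv f s) * deriv φ s * g s
        + η * (deriv φ s * W s)) := by
      apply intervalIntegral.integral_congr_ae
      filter_upwards [hφd] with x hx hx2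
      rw [uIoc_of_le hLL] at hx2
      have hx3 : x ∈ Icc (-L) L := ⟨hx2.1.le, hx2.2⟩
      rw [hx hx2, hχ, indicator_of_mem hx3, hq]
      ring
    rw [this, intervalIntegral.integral_add i1 (i2.const_mul _), intervalIntegral.integral_const_mul,
      h1, h3]
    simp only [mul_comm (deriv φ _)]
    rw [h2]; ring
  have hqi : IntervalIntegrable (fun s => q s * q s) volume (-L) L := by
    refine ii_of_bdd (hqm.mul hqm) (C := M * M) fun x hx => ?_
    rw [uIoc_of_le hLL] at hx
    rw [Pi.mul_apply, abs_mul]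
    have := hqb x ⟨hx.1.le, hx.2⟩
    gcongr
  rw [intervalIntegral.integral_eq_zero_iff_of_le_of_nonneg_ae hLL
    (Filter.Eventually.of_forall fun x => mul_self_nonneg _) hqi] at h4
  have h5 := (ae_restrict_iff' measurableSet_Ioc).1 h4
  filter_upwards [h5] with x hx hx2
  have := mul_self_eq_zero.1 (hx hx2)
  simp only [hq] at this
  linarith

lemma ftc {f : ℝ → ℝ} {K : NNReal} (hK : LipschitzWith K f) (a b : ℝ) :
    ∫ x in a..b, deriv f x = f b - f a :=
  (hK.lipschitzOnWith.absolutelyContinuousOnInterval).integral_deriv_eq_sub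

lemma eta_ne {p : ℝ} (hp : 1 < p) {L : ℝ} (hL : 0 < L) {g : ℝ → ℝ} (hg : Continuous g)
    (hg0 : ∀ x ∈ Icc (-L) L, 0 ≤ g x) (hgp : ∀ x ∈ Ioo (-L) L, 0 < g x)
    {η : ℝ} (hη : 0 ≤ η) (hinf : Inf g L p η) {f : ℝ → ℝ} (hf : IsMin g L p η f) : η ≠ 0 := by
  intro h0
  have h1 := ode hp hL hg hg0 hη hinf hf
  obtain ⟨K, hK⟩ := hf.lip
  have hne : ∀ᵐ x : ℝ, x ≠ L := by simp [ae_iff, measure_singleton]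
  have h2 : ∀ x ∈ Icc (-L) L, f x = f (-L) := by
    intro x hx
    have : ∫ s in (-L)..x, deriv f s = 0 := by
      apply intervalIntegral.integral_zero_ae
      filter_upwards [h1, hne] with s hs hs' hs2
      rw [uIoc_of_le hx.1] at hs2
      have hs3 : s ∈ Ioc (-L) L := ⟨hs2.1, hs2.2.trans hx.2⟩
      have := hs hs3
      rw [h0, neg_zero, zero_mul] at this
      have hgs := hgp s ⟨hs3.1, lt_of_le_of_ne hs3.2 hs'⟩
      exact eq_zero_of_psi ((mul_eq_zero.1 this).resolve_right hgs.ne')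
    rw [ftc hK] at this
    linarith
  have h3 : (∫ s in (-L)..L, psi p (f s) * g s) = psi p (f (-L)) * ∫ s in (-L)..L, g s := by
    rw [← intervalIntegral.integral_const_mul]
    apply intervalIntegral.integral_congr
    intro x hx
    rw [uIcc_of_le (by linarith)] at hx
    simp only [h2 x hx]
  have h4 : 0 < ∫ s in (-L)..L, g s :=
    intervalIntegral.intervalIntegral_pos_of_pos_on (hg.intervalIntegrable _ _) hgp (by linarith)
  rw [hf.con] at h3
  have h5 := eq_zero_of_psi ((mul_eq_zero.1 h3.symm).resolve_right h4.ne')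
  obtain ⟨x, hx, hx'⟩ := hf.nz
  exact hx' ((h2 x hx).trans h5)

/-- unique continuation to the right -/
lemma uc {p : ℝ} (hp : 1 < p) {L : ℝ} (hL : 0 < L) {g : ℝ → ℝ} (hg : Continuous g)
    (hg0 : ∀ x ∈ Icc (-L) L, 0 ≤ g x) (hgp : ∀ x ∈ Ioo (-L) L, 0 < g x)
    {η : ℝ} (hη : 0 ≤ η) (hinf : Inf g L p η) {f : ℝ → ℝ} (hf : IsMin g L p η f)
    {α β : ℝ} (hα : -L ≤ α) (hαβ : α < β) (hβ : β ≤ L) (hz : ∀ x ∈ Ioo α β, f x = 0) :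
    ∀ x ∈ Icc β L, f x = 0 := by
  have hη0 := eta_ne hp hL hg hg0 hgp hη hinf hf
  have h1 := ode hp hL hg hg0 hη hinf hf
  obtain ⟨K, hK⟩ := hf.lip
  have hpc := psi_cont hp
  have hfc := hK.continuous
  have hint : Continuous (fun s => psi p (f s) * g s) := by fun_prop
  have hii : ∀ a b, IntervalIntegrable (fun s => psi p (f s) * g s) volume a b :=
    fun a b => hint.intervalIntegrable a b
  set a := (α + β) / 2 with ha
  have haα : α < a := by rw [ha]; linarith
  have haβ : a < β := by rw [ha]; linarith
  have hWa : (∫ s in (-L)..a, psi p (f s) * g s) = 0 := by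
    have hne : (volume.restrict (Ioo α β)) ≠ 0 := by
      rw [Ne, Measure.restrict_eq_zero, Real.volume_Ioo]; simp [hαβ]
    have : (ae (volume.restrict (Ioo α β))).NeBot := ae_neBot.2 hne
    have h2 : ∀ᵐ x ∂(volume.restrict (Ioo α β)), x ∈ Ioo α β ∧
      (x ∈ Ioc (-L) L → psi p (deriv f x) * g x = - η * ∫ s in (-L)..x, psi p (f s) * g s) :=
      (ae_restrict_mem measurableSet_Ioo).and (ae_restrict_of_ae h1)
    obtain ⟨x, hx, hx2⟩ := h2.exists
    have hd : deriv f x = 0 := by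
      have : f =ᶠ[nhds x] fun _ => (0:ℝ) := by
        filter_upwards [Ioo_mem_nhds hx.1 hx.2] with y hy using hz y hy
      rw [this.deriv_eq]; simp
    have hx3 := hx2 ⟨by linarith [hx.1], by linarith [hx.2]⟩
    rw [hd, psi_zero, zero_mul] at hx3
    have hx4 : (∫ s in (-L)..x, psi p (f s) * g s) = 0 :=
      (mul_eq_zero.1 hx3.symm).resolve_left (neg_ne_zero.2 hη0)
    have hx5 : (∫ s in x..a, psi p (f s) * g s) = 0 := by
      apply intervalIntegral.integral_zero_ae
      refine Filter.Eventually.of_forall fun s hs => ?_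
      have hs' : s ∈ Ioo α β := by
        have := uIoc_subset_uIcc hs
        exact (ordConnected_Ioo (a := α) (b := β)).uIcc_subset hx ⟨haα, haβ⟩ this
      rw [hz s hs', psi_zero, zero_mul]
    rw [← intervalIntegral.integral_add_adjacent_intervals (hii (-L) x) (hii x a), hx4, hx5,
      add_zero]
  have hfa : f a = 0 := hz a ⟨haα, haβ⟩
  -- claim on compact subintervals
  have claim : ∀ b, a < b → b < L → ∀ x ∈ Icc a b, f x = 0 := by
    intro b hab hbL
    obtain ⟨G, hG⟩ :=
      (isCompact_Icc (a := -L) (b := L)).exists_bound_of_continuousOn hg.continuousOn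
    have hG0 : 0 ≤ G := (norm_nonneg _).trans (hG 0 ⟨by linarith, by linarith⟩)
    obtain ⟨y, hy, hym⟩ := (isCompact_Icc (a := a) (b := b)).exists_isMinOn
      (nonempty_Icc.2 hab.le) hg.continuousOn
    have hm0 : 0 < g y := hgp y ⟨by linarith [hy.1], by linarith [hy.2]⟩
    set m := g y with hm
    set H : ℝ → ℝ := fun x => ∫ s in a..x, |deriv f s| with hH
    have hdi : ∀ u v, IntervalIntegrable (fun s => |deriv f s|) volume u v := fun u v =>
      ii_of_bdd (C := K) (measurable_deriv f).abs fun x _ => by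
        rw [abs_abs]; exact deriv_bdd hK x
    have hHc : Continuous H := intervalIntegral.continuous_primitive hdi a
    have hHmono : ∀ u v, a ≤ u → u ≤ v → H u ≤ H v := by
      intro u v _ huv
      have : H v = H u + ∫ s in u..v, |deriv f s| :=
        (intervalIntegral.integral_add_adjacent_intervals (hdi a u) (hdi u v)).symm
      have h2 : 0 ≤ ∫ s in u..v, |deriv f s| :=
        intervalIntegral.integral_nonneg huv fun _ _ => abs_nonneg _
      linarith
    have hHa : H a = 0 := by simp [hH]
    have hH0 : ∀ u, a ≤ u → 0 ≤ H u := fun u hu => hHa ▸ hHmono a u le_rfl hu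
    have hfH : ∀ u, a ≤ u → |f u| ≤ H u := by
      intro u hu
      have : f u = ∫ s in a..u, deriv f s := by rw [ftc hK, hfa, sub_zero]
      rw [this]
      exact intervalIntegral.abs_integral_le_integral_abs hu
    set A := η * (G * (2 * L)) / m with hA
    have hA0 : 0 ≤ A := by positivity
    set C := A ^ (1 / (p - 1)) with hC
    have hC0 : 0 ≤ C := rpow_nonneg hA0 _
    have hp1 : 0 < p - 1 := by linarith
    have hbound : ∀ᵐ x, x ∈ Ioc a b → |deriv f x| ≤ C * H x := by
      filter_upwards [h1] with x hx hxab
      have hxL : x ∈ Ioc (-L) L := ⟨by linarith [hxab.1], by linarith [hxab.2]⟩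
      have e1 := hx hxL
      rw [← intervalIntegral.integral_add_adjacent_intervals (hii (-L) a) (hii a x), hWa,
        zero_add] at e1
      have e2 : |∫ s in a..x, psi p (f s) * g s| ≤ H x ^ (p - 1) * G * |x - a| := by
        rw [← Real.norm_eq_abs (∫ s in a..x, psi p (f s) * g s)]
        apply intervalIntegral.norm_integral_le_of_norm_le_const
        intro s hs
        rw [uIoc_of_le hxab.1.le] at hs
        have hgs := hG s ⟨by linarith [hs.1], by linarith [hs.2, hxL.2]⟩
        rw [norm_mul]
        rw [Real.norm_eq_abs, abs_psi hp]
        have := (hfH s hs.1.le).trans (hHmono s x hs.1.le hs.2)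
        have hHx := hH0 x hxab.1.le
        gcongr
      have e3 : |deriv f x| ^ (p - 1) * g x = η * |∫ s in a..x, psi p (f s) * g s| := by
        have := congrArg abs e1
        rw [abs_mul, abs_mul, abs_psi hp, abs_neg, abs_of_nonneg hη,
          abs_of_nonneg (hg0 x ⟨hxL.1.le, hxL.2⟩)] at this
        exact this
      have hgx : m ≤ g x := hym ⟨hxab.1.le, hxab.2⟩
      have hHx := rpow_nonneg (hH0 x hxab.1.le) (p - 1)
      have e4 : |deriv f x| ^ (p - 1) * m ≤ η * (H x ^ (p - 1) * G * (2 * L)) := by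
        calc |deriv f x| ^ (p - 1) * m ≤ |deriv f x| ^ (p - 1) * g x := by gcongr
          _ = η * |∫ s in a..x, psi p (f s) * g s| := e3
          _ ≤ η * (H x ^ (p - 1) * G * |x - a|) := by gcongr
          _ ≤ _ := by
            gcongr
            rw [abs_of_pos (by linarith [hxab.1])]
            linarith [hxL.2]
      have e5 : |deriv f x| ^ (p - 1) ≤ A * H x ^ (p - 1) := by
        rw [hA, div_mul_eq_mul_div, le_div_iff₀ hm0]
        linarith
      have e6 : A * H x ^ (p - 1) = (C * H x) ^ (p - 1) := by
        rw [Real.mul_rpow hC0 (hH0 x hxab.1.le), hC, ← Real.rpow_mul hA0, one_div,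
          inv_mul_cancel₀ hp1.ne', Real.rpow_one]
      rw [e6] at e5
      exact (Real.rpow_le_rpow_iff (abs_nonneg _) (mul_nonneg hC0 (hH0 x hxab.1.le)) hp1).1 e5
    set F : ℝ → ℝ := fun x => ∫ s in a..x, H s with hF
    have hFd : ∀ x, HasDerivAt F (H x) x := fun x =>
      intervalIntegral.integral_hasDerivAt_right (hHc.intervalIntegrable _ _)
        (hHc.stronglyMeasurableAtFilter _ _) hHc.continuousAt
    have hHF : ∀ x ∈ Icc a b, H x ≤ C * F x := by
      intro x hx
      rw [hF]
      simp only
      rw [← intervalIntegral.integral_const_mul]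
      apply intervalIntegral.integral_mono_ae_restrict hx.1 (hdi a x)
        ((hHc.intervalIntegrable _ _).const_mul _)
      have hne : ∀ᵐ x : ℝ, x ≠ a := by simp [ae_iff, measure_singleton]
      refine (ae_restrict_iff' measurableSet_Icc).2 ?_
      filter_upwards [hbound, hne] with s hs hsa hs2
      exact hs ⟨lt_of_le_of_ne hs2.1 hsa.symm, hs2.2.trans hx.2⟩
    have hF0 : ∀ x ∈ Icc a b, F x = 0 := by
      intro x hx
      have := norm_le_gronwallBound_of_norm_deriv_right_le (f := F) (f' := H) (δ := 0) (K := C)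
        (ε := 0) (a := a) (b := b)
        (fun x _ => (hFd x).continuousAt.continuousWithinAt)
        (fun x _ => (hFd x).hasDerivWithinAt) (by simp [hF]) (by
          intro x hx
          have hx' : x ∈ Icc a b := ⟨hx.1, hx.2.le⟩
          rw [add_zero, Real.norm_eq_abs, abs_of_nonneg (hH0 x hx.1)]
          refine (hHF x hx').trans ?_
          gcongr
          exact le_abs_self _) x hx
      rw [gronwallBound_ε0_δ0] at this
      exact norm_le_zero_iff.1 this
    intro x hx
    have e1 := hHF x hx
    rw [hF0 x hx, mul_zero] at e1
    exact abs_nonpos_iff.1 ((hfH x hx.1).trans e1)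
  have claim2 : ∀ x ∈ Ico a L, f x = 0 := fun x hx =>
    claim ((x + L) / 2) (by linarith [hx.1, hx.2]) (by linarith [hx.2]) x
      ⟨hx.1, by linarith [hx.2]⟩
  have haL : a < L := by linarith
  have hcl : IsClosed {x | f x = 0} := isClosed_eq hfc continuous_const
  have := closure_minimal claim2 hcl
  rw [closure_Ico haL.ne] at this
  intro x hx
  exact this ⟨by linarith [hx.1], hx.2⟩

lemma isMin_neg {g : ℝ → ℝ} {L p η : ℝ} {f : ℝ → ℝ} (hf : IsMin g L p η f) :
    IsMin g L p η (fun x => - f x) := by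
  obtain ⟨K, hK⟩ := hf.lip
  obtain ⟨x, hx, hx'⟩ := hf.nz
  have e1 : deriv (fun s => - f s) = fun s => - deriv f s := by funext s; exact deriv.fun_neg
  refine ⟨⟨K, hK.neg⟩, ⟨x, hx, by simpa using hx'⟩, ?_, ?_⟩
  · simp only [psi_neg, neg_mul, intervalIntegral.integral_neg, hf.con, neg_zero]
  · simp only [e1, abs_neg, hf.eqn]

lemma int_refl {L : ℝ} (F : ℝ → ℝ) : ∫ s in (-L)..L, F (-s) = ∫ s in (-L)..L, F s := by
  rw [intervalIntegral.integral_comp_neg, neg_neg]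

lemma isMin_refl {g : ℝ → ℝ} (hge : ∀ x, g (-x) = g x) {L p η : ℝ} {f : ℝ → ℝ}
    (hf : IsMin g L p η f) : IsMin g L p η (fun x => f (-x)) := by
  obtain ⟨K, hK⟩ := hf.lip
  obtain ⟨x, hx, hx'⟩ := hf.nz
  refine ⟨⟨K, ?_⟩, ⟨-x, ⟨by linarith [hx.2], by linarith [hx.1]⟩, by simpa using hx'⟩, ?_, ?_⟩
  · have := hK.comp (LipschitzWith.id (α := ℝ)).neg
    rw [mul_one] at this
    exact this
  · rw [← hf.con, ← int_refl]
    simp only [hge, neg_neg]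
  · have e : ∀ s, deriv (fun x => f (-x)) s = - deriv f (-s) := fun s => deriv_comp_neg f s
    have h1 := int_refl (L := L) (fun s => |deriv f s| ^ p * g s)
    have h2 := int_refl (L := L) (fun s => |f s| ^ p * g s)
    simp only [hge] at h1 h2
    simp only [e, abs_neg]
    rw [h1, h2, hf.eqn]

/-- If `f` vanishes at a positive interior point, it vanishes to the right of it. -/
lemma zero_right {p : ℝ} (hp : 1 < p) {L : ℝ} (hL : 0 < L) {g : ℝ → ℝ} (hg : Continuous g)
    (hge : ∀ x, g (-x) = g x)
    (hg0 : ∀ x ∈ Icc (-L) L, 0 ≤ g x) (hgp : ∀ x ∈ Ioo (-L) L, 0 < g x)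
    {η : ℝ} (hη : 0 ≤ η) (hinf : Inf g L p η) {f : ℝ → ℝ} (hf : IsMin g L p η f)
    {x₀ : ℝ} (h0 : 0 < x₀) (h0L : x₀ < L) (hfx : f x₀ = 0) :
    ∀ x ∈ Icc x₀ L, f x = 0 := by
  obtain ⟨K, hK⟩ := hf.lip
  have hp0 : 0 ≤ p := by linarith
  have hpne : p ≠ 0 := by linarith
  set u : ℝ → ℝ := fun x => f (max x x₀) with hu
  have hul : LipschitzWith K u := by
    have := hK.comp ((LipschitzWith.id (α := ℝ)).max_const x₀)
    rw [mul_one] at this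
    exact this
  have hunl : LipschitzWith K (fun x => u (-x)) := by
    have := hul.comp (LipschitzWith.id (α := ℝ)).neg
    rw [mul_one] at this
    exact this
  have hur : ∀ x, x₀ ≤ x → u x = f x := fun x hx => by simp [hu, hx]
  have hul0 : ∀ x, x ≤ x₀ → u x = 0 := fun x hx => by simp [hu, hx, hfx]
  have hdr : ∀ x, x₀ < x → deriv u x = deriv f x := fun x hx => by
    apply Filter.EventuallyEq.deriv_eq
    filter_upwards [Ioi_mem_nhds hx] with y hy using hur y (le_of_lt hy)
  have hdl : ∀ x, x < x₀ → deriv u x = 0 := fun x hx => by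
    have : u =ᶠ[nhds x] fun _ => (0:ℝ) := by
      filter_upwards [Iio_mem_nhds hx] with y hy using hul0 y (le_of_lt hy)
    rw [this.deriv_eq]; simp
  have hne : ∀ᵐ x : ℝ, x ≠ x₀ := by simp [ae_iff, measure_singleton]
  have hne' : ∀ᵐ x : ℝ, x ≠ -x₀ := by simp [ae_iff, measure_singleton]
  have hJu : (∫ s in (-L)..L, |deriv u s| ^ p * g s) = η * ∫ s in (-L)..L, |u s| ^ p * g s := by
    have := el hp hL hg hg0 hη hinf hf ⟨K, hul⟩
    have e1 : (∫ s in (-L)..L, psi p (deriv f s) * deriv u s * g s) =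
        ∫ s in (-L)..L, |deriv u s| ^ p * g s := by
      apply intervalIntegral.integral_congr_ae
      filter_upwards [hne] with x hx _
      rcases lt_or_gt_of_ne hx with h | h
      · simp [hdl x h, Real.zero_rpow hpne]
      · rw [hdr x h, psi_mul_self hp]
    have e2 : (∫ s in (-L)..L, psi p (f s) * u s * g s) =
        ∫ s in (-L)..L, |u s| ^ p * g s := by
      apply intervalIntegral.integral_congr
      intro x _
      simp only
      rcases le_total x x₀ with h | h
      · simp [hul0 x h, Real.zero_rpow hpne]
      · rw [hur x h, psi_mul_self hp]
    rw [e1, e2] at this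
    exact this
  set h : ℝ → ℝ := fun x => u x - u (-x) with hh
  have hhl : LipschitzWith (K + K) h := hul.sub hunl
  by_contra hcon
  push Not at hcon
  obtain ⟨x₁, hx₁, hfx₁⟩ := hcon
  have hcase : ∀ x, u x = 0 ∨ u (-x) = 0 := by
    intro x
    rcases le_total x 0 with hx | hx
    · exact Or.inl (hul0 x (by linarith))
    · exact Or.inr (hul0 (-x) (by linarith))
  have hhr : ∀ x, x₀ ≤ x → h x = f x := fun x hx => by
    simp only [hh]; rw [hur x hx, hul0 (-x) (by linarith), sub_zero]
  have hmin : IsMin g L p η h := by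
    refine ⟨⟨_, hhl⟩, ⟨x₁, ⟨by linarith [hx₁.1], hx₁.2⟩, by rw [hhr x₁ hx₁.1]; exact hfx₁⟩, ?_, ?_⟩
    · have e := int_refl (L := L) (fun s => psi p (h s) * g s)
      have e2 : ∀ s, psi p (h (-s)) * g (-s) = - (psi p (h s) * g s) := by
        intro s
        have : h (-s) = - h s := by simp [hh]
        rw [this, hge, psi_neg]; ring
      simp only [e2, intervalIntegral.integral_neg] at e
      linarith
    · have hpc := pow_cont hp
      have hgi : IntervalIntegrable (fun s => |u s| ^ p * g s) volume (-L) L := by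
        have := hul.continuous
        exact Continuous.intervalIntegrable (by fun_prop) _ _
      have hgi' : IntervalIntegrable (fun s => |u (-s)| ^ p * g s) volume (-L) L := by
        have := hul.continuous
        exact Continuous.intervalIntegrable (by fun_prop) _ _
      have hji := ii_gen (F := fun u v => |u| ^ p) (by
        simp only [Function.uncurry_def]; fun_prop) hul hul hg (-L) L
      have hji' : IntervalIntegrable (fun s => |deriv u (-s)| ^ p * g s) volume (-L) L := by
        have := ii_gen (F := fun u v => |u| ^ p) (by
          simp only [Function.uncurry_def]; fun_prop) hunl hul hg (-L) L
        have e : ∀ s, deriv (fun x => u (-x)) s = - deriv u (-s) := fun s => deriv_comp_neg u s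
        simpa only [e, abs_neg] using this
      have r1 := int_refl (L := L) (fun s => |deriv u s| ^ p * g s)
      have r2 := int_refl (L := L) (fun s => |u s| ^ p * g s)
      simp only [hge] at r1 r2
      have g1 : (∫ s in (-L)..L, |h s| ^ p * g s) = 2 * ∫ s in (-L)..L, |u s| ^ p * g s := by
        have : ∀ s, |h s| ^ p * g s = |u s| ^ p * g s + |u (-s)| ^ p * g s := by
          intro s
          simp only [hh]
          rcases hcase s with hs | hs <;> simp [hs, Real.zero_rpow hpne]
        simp only [this]
        rw [intervalIntegral.integral_add hgi hgi', r2]; ring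
      have g2 : (∫ s in (-L)..L, |deriv h s| ^ p * g s) =
          2 * ∫ s in (-L)..L, |deriv u s| ^ p * g s := by
        have : (∫ s in (-L)..L, |deriv h s| ^ p * g s) =
            ∫ s in (-L)..L, (|deriv u s| ^ p * g s + |deriv u (-s)| ^ p * g s) := by
          apply intervalIntegral.integral_congr_ae
          filter_upwards [hul.ae_differentiableAt_real, hunl.ae_differentiableAt_real, hne, hne']
            with x d1 d2 hx hx' _
          have e : deriv h x = deriv u x + deriv u (-x) := by
            have := (d1.hasDerivAt.sub d2.hasDerivAt).deriv
            rw [deriv_comp_neg] at this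
            rw [sub_neg_eq_add] at this
            exact this
          rw [e]
          rcases le_total x 0 with h3 | h3
          · simp [hdl x (by linarith), Real.zero_rpow hpne]
          · simp [hdl (-x) (by linarith), Real.zero_rpow hpne]
        rw [this, intervalIntegral.integral_add hji hji', r1]; ring
      rw [g1, g2, hJu]; ring
  have := uc hp hL hg hg0 hgp hη hinf hmin (α := -x₀) (β := x₀) (by linarith) (by linarith)
    h0L.le (fun x hx => by
      simp only [hh]
      rw [hul0 x hx.2.le, hul0 (-x) (by linarith [hx.1]), sub_zero])
  exact hfx₁ ((hhr x₁ hx₁.1).symm.trans (this x₁ hx₁))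

lemma no_pos_zero {p : ℝ} (hp : 1 < p) {L : ℝ} (hL : 0 < L) {g : ℝ → ℝ} (hg : Continuous g)
    (hge : ∀ x, g (-x) = g x)
    (hg0 : ∀ x ∈ Icc (-L) L, 0 ≤ g x) (hgp : ∀ x ∈ Ioo (-L) L, 0 < g x)
    {η : ℝ} (hη : 0 ≤ η) (hinf : Inf g L p η) {f : ℝ → ℝ} (hf : IsMin g L p η f)
    {x₀ : ℝ} (h0 : 0 < x₀) (h0L : x₀ < L) : f x₀ ≠ 0 := by
  intro hfx
  have h1 := zero_right hp hL hg hge hg0 hgp hη hinf hf h0 h0L hfx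
  have h2 := uc hp hL hg hg0 hgp hη hinf (isMin_refl hge hf) (α := -L) (β := -x₀) le_rfl
    (by linarith) (by linarith) (fun x hx => h1 (-x) ⟨by linarith [hx.2], by linarith [hx.1]⟩)
  obtain ⟨x, hx, hx'⟩ := hf.nz
  apply hx'
  rcases le_total x x₀ with h | h
  · have := h2 (-x) ⟨by linarith, by linarith [hx.1]⟩
    simpa using this
  · exact h1 x ⟨h, hx.2⟩

lemma pos_of_nonvanish {f : ℝ → ℝ} (hf : Continuous f) {a b c : ℝ} (hc : c ∈ Ioo a b)
    (hfc : 0 < f c) (h : ∀ x ∈ Ioo a b, f x ≠ 0) : ∀ x ∈ Ioo a b, 0 < f x := by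
  intro x hx
  by_contra hneg
  have := (isPreconnected_Ioo (a := a) (b := b)).intermediate_value hx hc hf.continuousOn
    (⟨not_lt.1 hneg, hfc.le⟩ : (0:ℝ) ∈ Icc (f x) (f c))
  obtain ⟨y, hy, hy'⟩ := this
  exact h y hy hy'

lemma no_end_zero_aux {p : ℝ} (hp : 1 < p) {L : ℝ} (hL : 0 < L) {g : ℝ → ℝ} (hg : Continuous g)
    (hg0 : ∀ x ∈ Icc (-L) L, 0 ≤ g x) (hgp : ∀ x ∈ Ioo (-L) L, 0 < g x)
    {η : ℝ} (hη : 0 ≤ η) (hinf : Inf g L p η) {f : ℝ → ℝ} (hf : IsMin g L p η f)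
    (hpos : ∀ x ∈ Ioo 0 L, 0 < f x) : f L ≠ 0 := by
  have h1 := ode hp hL hg hg0 hη hinf hf
  obtain ⟨K, hK⟩ := hf.lip
  have hpc := psi_cont hp
  have hfc := hK.continuous
  have hint : Continuous (fun s => psi p (f s) * g s) := by fun_prop
  have hfL : 0 ≤ f L := by
    have hcl : IsClosed {x | 0 ≤ f x} := isClosed_le continuous_const hfc
    have := closure_minimal (fun x hx => (hpos x hx).le) hcl
    rw [closure_Ioo hL.ne] at this
    exact this ⟨hL.le, le_rfl⟩
  have hne : ∀ᵐ x : ℝ, x ≠ L := by simp [ae_iff, measure_singleton]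
  have h2 : 0 ≤ ∫ s in (L/2)..L, deriv f s := by
    apply intervalIntegral.integral_nonneg_of_ae_restrict (by linarith)
    refine (ae_restrict_iff' measurableSet_Icc).2 ?_
    filter_upwards [h1, hne] with x hx hxL hx2
    have hx3 : x < L := lt_of_le_of_ne hx2.2 hxL
    have e := hx ⟨by linarith [hx2.1], hx2.2⟩
    have e2 := hf.con
    rw [← intervalIntegral.integral_add_adjacent_intervals (hint.intervalIntegrable (-L) x)
      (hint.intervalIntegrable x L)] at e2
    have e3 : 0 ≤ ∫ s in x..L, psi p (f s) * g s := by
      apply intervalIntegral.integral_nonneg hx2.2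
      intro s hs
      refine mul_nonneg (psi_nonneg ?_) (hg0 s ⟨by linarith [hx2.1, hs.1], hs.2⟩)
      rcases eq_or_lt_of_le hs.2 with h | h
      · rw [h]; exact hfL
      · exact (hpos s ⟨by linarith [hx2.1, hs.1], h⟩).le
    have e4 : 0 ≤ psi p (deriv f x) * g x := by
      rw [e]
      nlinarith
    have hgx := hgp x ⟨by linarith [hx2.1], hx3⟩
    exact nonneg_of_psi_nonneg (nonneg_of_mul_nonneg_left e4 hgx)
  rw [ftc hK] at h2
  have := hpos (L/2) ⟨by linarith, by linarith⟩
  intro h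
  linarith

lemma no_pos_zero' {p : ℝ} (hp : 1 < p) {L : ℝ} (hL : 0 < L) {g : ℝ → ℝ} (hg : Continuous g)
    (hge : ∀ x, g (-x) = g x)
    (hg0 : ∀ x ∈ Icc (-L) L, 0 ≤ g x) (hgp : ∀ x ∈ Ioo (-L) L, 0 < g x)
    {η : ℝ} (hη : 0 ≤ η) (hinf : Inf g L p η) {f : ℝ → ℝ} (hf : IsMin g L p η f)
    {x₀ : ℝ} (h0 : 0 < x₀) (h0L : x₀ ≤ L) : f x₀ ≠ 0 := by
  have hnv : ∀ x ∈ Ioo 0 L, f x ≠ 0 := fun x hx =>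
    no_pos_zero hp hL hg hge hg0 hgp hη hinf hf hx.1 hx.2
  rcases lt_or_eq_of_le h0L with h | h
  · exact hnv x₀ ⟨h0, h⟩
  · rw [h]
    obtain ⟨K, hK⟩ := hf.lip
    have hm : L / 2 ∈ Ioo 0 L := ⟨by linarith, by linarith⟩
    rcases lt_or_gt_of_ne (hnv _ hm) with h1 | h1
    · have := no_end_zero_aux hp hL hg hg0 hgp hη hinf (isMin_neg hf)
        (pos_of_nonvanish hK.neg.continuous hm (by simpa using h1)
          (fun x hx => by simpa using hnv x hx))
      simpa using this
    · exact no_end_zero_aux hp hL hg hg0 hgp hη hinf hf (pos_of_nonvanish hK.continuous hm h1 hnv)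

lemma con_pos {p : ℝ} (hp : 1 < p) {L : ℝ} (hL : 0 < L) {g : ℝ → ℝ} (hg : Continuous g)
    (hgp : ∀ x ∈ Ioo (-L) L, 0 < g x) {f : ℝ → ℝ} (hfc : Continuous f)
    (hpos : ∀ x ∈ Ioo (-L) L, 0 < f x) : 0 < ∫ s in (-L)..L, psi p (f s) * g s := by
  have hpc := psi_cont hp
  refine intervalIntegral.intervalIntegral_pos_of_pos_on
    (Continuous.intervalIntegrable (by fun_prop) _ _)
    (fun x hx => mul_pos (psi_pos (hpos x hx)) (hgp x hx)) (by linarith)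

lemma zeros {p : ℝ} (hp : 1 < p) {L : ℝ} (hL : 0 < L) {g : ℝ → ℝ} (hg : Continuous g)
    (hge : ∀ x, g (-x) = g x)
    (hg0 : ∀ x ∈ Icc (-L) L, 0 ≤ g x) (hgp : ∀ x ∈ Ioo (-L) L, 0 < g x)
    {η : ℝ} (hη : 0 ≤ η) (hinf : Inf g L p η) {f : ℝ → ℝ} (hf : IsMin g L p η f) :
    ∀ x ∈ Icc (-L) L, f x = 0 ↔ x = 0 := by
  have key : ∀ x ∈ Icc (-L) L, x ≠ 0 → f x ≠ 0 := by
    intro x hx hx0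
    rcases lt_or_gt_of_ne hx0 with h | h
    · have := no_pos_zero' hp hL hg hge hg0 hgp hη hinf (isMin_refl hge hf) (x₀ := -x)
        (by linarith) (by linarith [hx.1])
      simpa using this
    · exact no_pos_zero' hp hL hg hge hg0 hgp hη hinf hf h hx.2
  have hz : f 0 = 0 := by
    by_contra h0
    obtain ⟨K, hK⟩ := hf.lip
    have hm : (0:ℝ) ∈ Ioo (-L) L := ⟨by linarith, by linarith⟩
    have hnv : ∀ x ∈ Ioo (-L) L, f x ≠ 0 := by
      intro x hx
      by_cases hx0 : x = 0
      · rw [hx0]; exact h0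
      · exact key x ⟨hx.1.le, hx.2.le⟩ hx0
    rcases lt_or_gt_of_ne h0 with h1 | h1
    · have := con_pos hp hL hg hgp hK.neg.continuous
        (pos_of_nonvanish hK.neg.continuous hm (by simpa using h1)
          (fun x hx => by simpa using hnv x hx))
      exact this.ne' (isMin_neg hf).con
    · exact (con_pos hp hL hg hgp hK.continuous
        (pos_of_nonvanish hK.continuous hm h1 hnv)).ne' hf.con
  intro x hx
  refine ⟨fun h => ?_, fun h => h ▸ hz⟩
  by_contra hx0
  exact key x hx hx0 h

end EtaAux

/-- Lemma A.1, properties of minimizers. Every Lipschitz minimizer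
`f` attaining `η` satisfies the multiplier-free weak Euler–Lagrange equation
`∫ |f'|^(p-2) f' φ' g = η ∫ |f|^(p-2) f φ g` for every Lipschitz test function `φ`
(i.e. `f` weakly solves `-(g |f'|^(p-2) f')' = η g |f|^(p-2) f` with Neumann boundary
conditions), and `f` vanishes exactly at the origin. -/
theorem eta1D_minimizer_properties {N : ℕ} (hN : 2 ≤ N) (p : ℝ) (hp : 1 < p)
    (d : ℝ) (hd : 0 < d) (f : ℝ → ℝ) (hf : Admissible1D N p d f)
    (hmin : (∫ s in (-(d / 2))..(d / 2), |deriv f s| ^ p * coneWeight N d s) =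
      eta1D N p d * ∫ s in (-(d / 2))..(d / 2), |f s| ^ p * coneWeight N d s) :
    (∀ φ : ℝ → ℝ, (∃ K : NNReal, LipschitzWith K φ) →
      (∫ s in (-(d / 2))..(d / 2),
          |deriv f s| ^ (p - 2) * deriv f s * deriv φ s * coneWeight N d s) =
        eta1D N p d * ∫ s in (-(d / 2))..(d / 2),
          |f s| ^ (p - 2) * f s * φ s * coneWeight N d s) ∧
    (∀ x ∈ Icc (-(d / 2)) (d / 2), f x = 0 ↔ x = 0) := by
  have hL : 0 < d / 2 := by linarith
  have hn : N - 1 ≠ 0 := by omega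
  have hω : 0 < (volume (Metric.ball (0 : EuclideanSpace ℝ (Fin (N - 1))) 1)).toReal :=
    ENNReal.toReal_pos (Metric.measure_ball_pos volume _ one_pos).ne' measure_ball_lt_top.ne
  have hg : Continuous (coneWeight N d) := by
    unfold coneWeight; fun_prop
  have hge : ∀ x, coneWeight N d (-x) = coneWeight N d x := by
    intro x; simp [coneWeight]
  have hg0 : ∀ x ∈ Icc (-(d / 2)) (d / 2), 0 ≤ coneWeight N d x := by
    intro x hx
    have := abs_le.2 hx
    exact mul_nonneg hω.le (pow_nonneg (by linarith) _)
  have hgp : ∀ x ∈ Ioo (-(d / 2)) (d / 2), 0 < coneWeight N d x := by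
    intro x hx
    have := abs_lt.2 hx
    exact mul_pos hω (pow_pos (by linarith) _)
  have hnn : ∀ h : ℝ → ℝ, 0 ≤ ∫ s in (-(d / 2))..(d / 2), |h s| ^ p * coneWeight N d s := by
    intro h
    exact intervalIntegral.integral_nonneg (by linarith) fun u hu =>
      mul_nonneg (rpow_nonneg (abs_nonneg _) _) (hg0 u hu)
  have hη : 0 ≤ eta1D N p d := by
    apply Real.sInf_nonneg
    rintro R ⟨h, _, rfl⟩
    exact div_nonneg (hnn _) (hnn _)
  have hinf : EtaAux.Inf (coneWeight N d) (d / 2) p (eta1D N p d) := by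
    intro h hlip hcon
    by_cases hz : ∃ x ∈ Icc (-(d / 2)) (d / 2), h x ≠ 0
    · have hle : eta1D N p d ≤ (∫ s in (-(d / 2))..(d / 2), |deriv h s| ^ p * coneWeight N d s) /
          (∫ s in (-(d / 2))..(d / 2), |h s| ^ p * coneWeight N d s) := by
        apply csInf_le
        · refine ⟨0, ?_⟩
          rintro R ⟨h, _, rfl⟩
          exact div_nonneg (hnn _) (hnn _)
        · exact ⟨h, ⟨hlip, hz, hcon⟩, rfl⟩
      rcases eq_or_lt_of_le (hnn h) with h0 | h0
      · rw [← h0, mul_zero]; exact hnn _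
      · exact (le_div_iff₀ h0).1 hle
    · push Not at hz
      have : (∫ s in (-(d / 2))..(d / 2), |h s| ^ p * coneWeight N d s) = 0 := by
        apply intervalIntegral.integral_zero_ae
        refine Filter.Eventually.of_forall fun s hs => ?_
        rw [uIoc_of_le (by linarith)] at hs
        rw [hz s ⟨hs.1.le, hs.2⟩, abs_zero, Real.zero_rpow (by linarith), zero_mul]
      rw [this, mul_zero]; exact hnn _
  have hm : EtaAux.IsMin (coneWeight N d) (d / 2) p (eta1D N p d) f :=
    ⟨hf.1, hf.2.1, hf.2.2, hmin⟩
  exact ⟨fun φ hφ => EtaAux.el hp hL hg hg0 hη hinf hm hφ,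
    EtaAux.zeros hp hL hg hge hg0 hgp hη hinf hm⟩
end
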